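/- arXiv:1511.03607 — 3 statements merged into one kernel-verified Lean document; each statement's English description precedes it below -/
import Mathlib

section
/- There exist positive constants C_a, C_b with the following property. Let θ ∈ (0, 1), let X₀ ∈ ℝ^{n×p} have i.i.d. BG(θ) entries, and let Ξ̃ ∈ ℝ^{n×n} be any fixed matrix with spectral norm ‖Ξ̃‖_op ≤ 1/(2n). Then with probability at least 1 − θ(np)^{−7} − exp(−0.3 θ n p), simultaneously for all w ∈ Γ: ‖∇_w g(w; X₀ + Ξ̃X₀) − ∇_w g(w; X₀)‖ ≤ C_a (n/μ) log(np) ‖Ξ̃‖_op, and ‖∇²_w g(w; X₀ + Ξ̃X₀) − ∇²_w g(w; X₀)‖_op ≤ C_b max{n^{3/2}/μ², n²/μ} log^{3/2}(np) ‖Ξ̃‖_op. -/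
open MeasureTheory ProbabilityTheory Real Matrix
open scoped RealInnerProductSpace ENNReal NNReal

noncomputable section

/-- The Bernoulli–Gaussian law `BG(θ)`: with probability `θ` a standard Gaussian,
with probability `1-θ` a point mass at `0`. -/
def bg (θ : ℝ) : Measure ℝ :=
  θ.toNNReal • gaussianReal 0 1 + (1 - θ).toNNReal • Measure.dirac 0

instance bg.instIsFiniteMeasure (θ : ℝ) : IsFiniteMeasure (bg θ) := by
  unfold bg; infer_instance

/-- Law of an `n × p` matrix with i.i.d. `BG(θ)` entries. -/
def bgMatrix (θ : ℝ) (n p : ℕ) : Measure (Fin n → Fin p → ℝ) :=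
  Measure.pi fun _ => Measure.pi fun _ => bg θ

/-- Law of a vector in `ℝ^n` with i.i.d. `BG(θ)` entries. -/
def bgVec (θ : ℝ) (n : ℕ) : Measure (Fin n → ℝ) :=
  Measure.pi fun _ => bg θ

/-- The smooth sparsity surrogate `h_μ(z) = μ log cosh (z/μ)`. -/
def hmu (μ z : ℝ) : ℝ := μ * Real.log (Real.cosh (z / μ))

/-- Reparametrization `q(w) = (w, √(1-‖w‖²))` with `w` in the unit ball of `ℝ^{n-1}`. -/
def qmap (n : ℕ) (w : EuclideanSpace ℝ (Fin (n - 1))) : Fin n → ℝ :=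
  fun i => if h : (i : ℕ) < n - 1 then w ⟨i, h⟩ else Real.sqrt (1 - ‖w‖ ^ 2)

/-- `f(q; Y) = (1/p) ∑ₖ h_μ(qᵀ yₖ)`. -/
def ffun (n p : ℕ) (μ : ℝ) (Y : Matrix (Fin n) (Fin p) ℝ)
    (q : EuclideanSpace ℝ (Fin n)) : ℝ :=
  (p : ℝ)⁻¹ * ∑ k : Fin p, hmu μ (∑ i : Fin n, q i * Y i k)

/-- `g(w; Y) = f(q(w); Y)`. -/
def gfun (n p : ℕ) (μ : ℝ) (Y : Matrix (Fin n) (Fin p) ℝ)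
    (w : EuclideanSpace ℝ (Fin (n - 1))) : ℝ :=
  (p : ℝ)⁻¹ * ∑ k : Fin p, hmu μ (∑ i : Fin n, qmap n w i * Y i k)

/-- Gradient `∇g(w; Y)` in `w`. -/
def gradg (n p : ℕ) (μ : ℝ) (Y : Matrix (Fin n) (Fin p) ℝ)
    (w : EuclideanSpace ℝ (Fin (n - 1))) : EuclideanSpace ℝ (Fin (n - 1)) :=
  gradient (gfun n p μ Y) w

/-- Hessian `∇²g(w; Y)` in `w`, as a continuous linear map. -/
def hessg (n p : ℕ) (μ : ℝ) (Y : Matrix (Fin n) (Fin p) ℝ)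
    (w : EuclideanSpace ℝ (Fin (n - 1))) :
    EuclideanSpace ℝ (Fin (n - 1)) →L[ℝ] EuclideanSpace ℝ (Fin (n - 1)) :=
  fderiv ℝ (gradg n p μ Y) w

/-- The set `Γ = {w : ‖w‖ < √((4n-1)/(4n))}`. -/
def GammaSet (n : ℕ) : Set (EuclideanSpace ℝ (Fin (n - 1))) :=
  {w | ‖w‖ < Real.sqrt ((4 * (n : ℝ) - 1) / (4 * n))}

/-- Spectral (`ℓ²→ℓ²` operator) norm of а matrix. -/
def specNorm {m k : ℕ} (M : Matrix (Fin m) (Fin k) ℝ) : ℝ :=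
  ‖LinearMap.toContinuousLinearMap (Matrix.toEuclideanLin M)‖

/-- Largest magnitude of an entry of a matrix. -/
def Minf {m k : ℕ} (M : Matrix (Fin m) (Fin k) ℝ) : ℝ := ⨆ i, ⨆ j, |M i j|

/-- Condition number: ratio of largest to smallest singular value. -/
def kappa {n : ℕ} (s : Fin n → ℝ) : ℝ := (⨆ i, s i) / (⨅ i, s i)

/-- Signed standard basis vectors `{± e_i}` of `ℝ^n`. -/
def SignedBasis (n : ℕ) : Set (EuclideanSpace ℝ (Fin n)) :=
  {b | ∃ i : Fin n, b = EuclideanSpace.single i (1 : ℝ) ∨ b = -EuclideanSpace.single i (1 : ℝ)}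

/-- Set of local minimizers of `f(·; Y)` over the unit sphere `S^{n-1}`. -/
def LocalMins (n p : ℕ) (μ : ℝ) (Y : Matrix (Fin n) (Fin p) ℝ) :
    Set (EuclideanSpace ℝ (Fin n)) :=
  {q | q ∈ Metric.sphere (0 : EuclideanSpace ℝ (Fin n)) 1 ∧
       IsLocalMinOn (ffun n p μ Y) (Metric.sphere (0 : EuclideanSpace ℝ (Fin n)) 1) q}

/-- Expected objective `E_x[h_μ(q(w)ᵀ x)]` for `x` with i.i.d. `BG(θ)` entries. -/
def Gexp (n : ℕ) (θ μ : ℝ) (w : EuclideanSpace ℝ (Fin (n - 1))) : ℝ :=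
  ∫ x, hmu μ (∑ i : Fin n, qmap n w i * x i) ∂(bgVec θ n)

section HyperbolicTangent

lemma hasDerivAt_tanh_real (z : ℝ) : HasDerivAt Real.tanh (1 - Real.tanh z ^ 2) z := by
  have h := (Real.hasDerivAt_sinh z).div (Real.hasDerivAt_cosh z) (Real.cosh_pos z).ne'
  have hfun : Real.tanh = Real.sinh / Real.cosh := by
    funext x
    simp [Real.tanh_eq_sinh_div_cosh]
  rw [hfun]
  refine h.congr_deriv ?_
  have := (Real.cosh_pos z).ne'
  simp only [Pi.div_apply]
  field_simp

lemma tanh_sq_le_one (z : ℝ) : Real.tanh z ^ 2 ≤ 1 := by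
  rw [Real.tanh_eq_sinh_div_cosh, div_pow, div_le_one (by positivity [Real.cosh_pos z])]
  linarith [Real.cosh_sq z]

lemma abs_tanh_le_one (z : ℝ) : |Real.tanh z| ≤ 1 := by
  rw [← sq_le_one_iff_abs_le_one]
  exact tanh_sq_le_one z

lemma abs_tanh_sub_tanh_le (x y : ℝ) : |Real.tanh x - Real.tanh y| ≤ |x - y| := by
  have h := Convex.norm_image_sub_le_of_norm_hasDerivWithin_le (f := Real.tanh)
    (f' := fun z => 1 - Real.tanh z ^ 2) (s := Set.univ) (C := 1) (x := y) (y := x)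
    (fun z _ => (hasDerivAt_tanh_real z).hasDerivWithinAt)
    (fun z _ => by
      rw [Real.norm_eq_abs, abs_le]
      constructor <;> nlinarith [tanh_sq_le_one z, sq_nonneg (Real.tanh z)])
    convex_univ (Set.mem_univ _) (Set.mem_univ _)
  simpa using h

lemma abs_tanh_le (x : ℝ) : |Real.tanh x| ≤ |x| := by
  simpa using abs_tanh_sub_tanh_le x 0

lemma abs_one_sub_tanh_sq_le_one (z : ℝ) : |1 - Real.tanh z ^ 2| ≤ 1 := by
  rw [abs_le]
  constructor <;> nlinarith [tanh_sq_le_one z, sq_nonneg (Real.tanh z)]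

lemma abs_tanh_sq_sub_tanh_sq_le (x y : ℝ) :
    |(1 - Real.tanh x ^ 2) - (1 - Real.tanh y ^ 2)| ≤ 2 * |x - y| := by
  have h : (1 - Real.tanh x ^ 2) - (1 - Real.tanh y ^ 2) =
      -((Real.tanh x + Real.tanh y) * (Real.tanh x - Real.tanh y)) := by ring
  rw [h, abs_neg, abs_mul]
  refine mul_le_mul ?_ (abs_tanh_sub_tanh_le x y) (abs_nonneg _) zero_le_two
  linarith [abs_add_le (Real.tanh x) (Real.tanh y), abs_tanh_le_one x, abs_tanh_le_one y]

lemma hasDerivAt_hmu {μ : ℝ} (hμ : μ ≠ 0) (z : ℝ) :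
    HasDerivAt (hmu μ) (Real.tanh (z / μ)) z := by
  have h := (((hasDerivAt_id z).div_const μ).cosh.log (Real.cosh_pos _).ne').const_mul μ
  refine h.congr_deriv ?_
  rw [Real.tanh_eq_sinh_div_cosh]
  simp only [id]
  field_simp

end HyperbolicTangent

lemma norm_inv_smul_sum_sub_le {p : ℕ} {F : Type*} [NormedAddCommGroup F] [NormedSpace ℝ F]
    (x y : Fin p → F) {B : ℝ} (hB : 0 ≤ B) (h : ∀ k, ‖x k - y k‖ ≤ B) :
    ‖(p : ℝ)⁻¹ • ∑ k, x k - (p : ℝ)⁻¹ • ∑ k, y k‖ ≤ B := by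
  rw [← smul_sub, ← Finset.sum_sub_distrib, norm_smul, Real.norm_of_nonneg (by positivity)]
  have hs : ‖∑ k, (x k - y k)‖ ≤ p * B := by
    simpa using norm_sum_le_of_le Finset.univ fun k _ => h k
  rcases eq_or_ne p 0 with rfl | hp
  · simpa using hB
  · calc (p : ℝ)⁻¹ * ‖∑ k, (x k - y k)‖ ≤ (p : ℝ)⁻¹ * (p * B) := by gcongr
      _ = B := by field_simp

section HemisphereChart

variable {E : Type*} [NormedAddCommGroup E]

/-- The height `√(1 - ‖w‖²)` of the upper unit hemisphere above `w`. -/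
def chartHeight (w : E) : ℝ := √(1 - ‖w‖ ^ 2)

lemma chartHeight_pos {w : E} (hw : ‖w‖ < 1) : 0 < chartHeight w :=
  Real.sqrt_pos.2 (by nlinarith [norm_nonneg w])

lemma chartHeight_le_one (w : E) : chartHeight w ≤ 1 :=
  Real.sqrt_le_one.2 (by nlinarith [norm_nonneg w])

variable [InnerProductSpace ℝ E]

/-- The linear functional `(a, b)` on `E × ℝ` evaluated at the hemisphere point above `w`. -/
def chartLin (a : E) (b : ℝ) (w : E) : ℝ := ⟪a, w⟫ + chartHeight w * b

/-- The gradient of `chartLin a b`. -/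
def chartGrad (a : E) (b : ℝ) (w : E) : E := a - (b * (chartHeight w)⁻¹) • w

/-- The negated Hessian of `chartHeight`. -/
def chartCurv (w : E) : E →L[ℝ] E :=
  (chartHeight w)⁻¹ • ContinuousLinearMap.id ℝ E +
    ((chartHeight w)⁻¹ ^ 3) • InnerProductSpace.rankOne ℝ w w

lemma hasFDerivAt_chartHeight {w : E} (hw : ‖w‖ < 1) :
    HasFDerivAt chartHeight (-(chartHeight w)⁻¹ • innerSL ℝ w) w := by
  have hpos : (1 - ‖w‖ ^ 2) ≠ 0 := by nlinarith [norm_nonneg w]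
  have h := (((hasStrictFDerivAt_norm_sq w).hasFDerivAt).const_sub 1).sqrt hpos
  refine h.congr_fderiv ?_
  ext u
  simp [chartHeight]
  ring

lemma hasFDerivAt_chartLin (a : E) (b : ℝ) {w : E} (hw : ‖w‖ < 1) :
    HasFDerivAt (chartLin a b) (innerSL ℝ (chartGrad a b w)) w := by
  have h := (innerSL ℝ a).hasFDerivAt (x := w) |>.add ((hasFDerivAt_chartHeight hw).mul_const b)
  refine h.congr_fderiv ?_
  ext u
  simp [chartGrad]
  ring

lemma hasFDerivAt_chartGrad (a : E) (b : ℝ) {w : E} (hw : ‖w‖ < 1) :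
    HasFDerivAt (chartGrad a b) (-(b • chartCurv w)) w := by
  have hne := (chartHeight_pos hw).ne'
  have hinv := (hasDerivAt_inv hne).comp_hasFDerivAt w (hasFDerivAt_chartHeight hw)
  have h := ((hinv.const_mul b).smul (hasFDerivAt_id w)).const_sub a
  refine h.congr_fderiv ?_
  ext u
  simp [chartCurv, smul_smul]
  module

/-- The Hessian of `hmu μ ∘ chartLin a b`. -/
def chartHess (μ : ℝ) (a : E) (b : ℝ) (w : E) : E →L[ℝ] E :=
  ((1 - Real.tanh (chartLin a b w / μ) ^ 2) / μ) •
      InnerProductSpace.rankOne ℝ (chartGrad a b w) (chartGrad a b w) -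
    (Real.tanh (chartLin a b w / μ) * b) • chartCurv w

lemma hasFDerivAt_hmu_chartLin {μ : ℝ} (hμ : μ ≠ 0) (a : E) (b : ℝ) {w : E} (hw : ‖w‖ < 1) :
    HasFDerivAt (fun w => hmu μ (chartLin a b w))
      (innerSL ℝ (Real.tanh (chartLin a b w / μ) • chartGrad a b w)) w := by
  have h := (hasDerivAt_hmu hμ (chartLin a b w)).comp_hasFDerivAt w (hasFDerivAt_chartLin a b hw)
  exact h.congr_fderiv (by simp)

lemma hasFDerivAt_tanh_smul_chartGrad (μ : ℝ) (a : E) (b : ℝ) {w : E} (hw : ‖w‖ < 1) :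
    HasFDerivAt (fun w => Real.tanh (chartLin a b w / μ) • chartGrad a b w)
      (chartHess μ a b w) w := by
  have hd : HasDerivAt (fun z : ℝ => Real.tanh (z / μ))
      ((1 - Real.tanh (chartLin a b w / μ) ^ 2) / μ) (chartLin a b w) := by
    have h := (hasDerivAt_tanh_real (chartLin a b w / μ)).comp (chartLin a b w)
      ((hasDerivAt_id _).div_const μ)
    exact h.congr_deriv (by ring)
  have h := (hd.comp_hasFDerivAt w (hasFDerivAt_chartLin a b hw)).smul
    (hasFDerivAt_chartGrad a b hw)
  refine h.congr_fderiv ?_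
  ext u
  simp [chartHess, smul_smul]
  module

variable [CompleteSpace E] {p : ℕ}

/-- The objective in the hemisphere chart, for data columns `(a k, b k)`. -/
def chartObj (μ : ℝ) (a : Fin p → E) (b : Fin p → ℝ) (w : E) : ℝ :=
  (p : ℝ)⁻¹ * ∑ k, hmu μ (chartLin (a k) (b k) w)

lemma gradient_chartObj {μ : ℝ} (hμ : μ ≠ 0) (a : Fin p → E) (b : Fin p → ℝ) {w : E}
    (hw : ‖w‖ < 1) :
    gradient (chartObj μ a b) w =
      (p : ℝ)⁻¹ • ∑ k, Real.tanh (chartLin (a k) (b k) w / μ) • chartGrad (a k) (b k) w := by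
  refine HasGradientAt.gradient ?_
  rw [hasGradientAt_iff_hasFDerivAt]
  have h := (HasFDerivAt.fun_sum (u := Finset.univ) fun k _ =>
    hasFDerivAt_hmu_chartLin hμ (a k) (b k) hw).const_mul (p : ℝ)⁻¹
  refine h.congr_fderiv ?_
  ext u
  simp

lemma fderiv_gradient_chartObj {μ : ℝ} (hμ : μ ≠ 0) (a : Fin p → E) (b : Fin p → ℝ) {w : E}
    (hw : ‖w‖ < 1) :
    fderiv ℝ (gradient (chartObj μ a b)) w =
      (p : ℝ)⁻¹ • ∑ k, chartHess μ (a k) (b k) w := by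
  have hev : gradient (chartObj μ a b) =ᶠ[nhds w] fun w =>
      (p : ℝ)⁻¹ • ∑ k, Real.tanh (chartLin (a k) (b k) w / μ) • chartGrad (a k) (b k) w := by
    filter_upwards [(isOpen_lt continuous_norm continuous_const).mem_nhds hw] with v hv
    exact gradient_chartObj hμ a b hv
  rw [hev.fderiv_eq]
  exact ((HasFDerivAt.fun_sum (u := Finset.univ) fun k _ =>
    hasFDerivAt_tanh_smul_chartGrad μ (a k) (b k) hw).const_smul (p : ℝ)⁻¹).fderiv

end HemisphereChart

section ChartPerturbation

variable {E : Type*} [NormedAddCommGroup E] [InnerProductSpace ℝ E]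

lemma chartLin_sub (a a' : E) (b b' : ℝ) (w : E) :
    chartLin a' b' w - chartLin a b w = chartLin (a' - a) (b' - b) w := by
  simp only [chartLin, inner_sub_left]
  ring

lemma chartGrad_sub (a a' : E) (b b' : ℝ) (w : E) :
    chartGrad a' b' w - chartGrad a b w = chartGrad (a' - a) (b' - b) w := by
  simp only [chartGrad]
  module

lemma abs_chartLin_le {a w : E} {b ν c : ℝ} (hν : 1 ≤ ν) (hw : ‖w‖ < 1) (ha : ‖a‖ ≤ ν * c)
    (hb : |b| ≤ c) : |chartLin a b w| ≤ 2 * ν * c := by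
  have hc : 0 ≤ c := (abs_nonneg b).trans hb
  have h1 : |⟪a, w⟫| ≤ ν * c := by
    refine (abs_real_inner_le_norm a w).trans ?_
    nlinarith [norm_nonneg a, norm_nonneg w]
  have h2 : |chartHeight w * b| ≤ c := by
    rw [abs_mul, abs_of_pos (chartHeight_pos hw)]
    nlinarith [chartHeight_le_one w, chartHeight_pos hw, abs_nonneg b]
  refine (abs_add_le _ _).trans ?_
  nlinarith

lemma norm_chartGrad_le {a w : E} {b ν c : ℝ} (hw : ‖w‖ < 1)
    (hh : (chartHeight w)⁻¹ ≤ 2 * ν) (ha : ‖a‖ ≤ ν * c) (hb : |b| ≤ c) :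
    ‖chartGrad a b w‖ ≤ 3 * ν * c := by
  have hi : 0 < (chartHeight w)⁻¹ := inv_pos.2 (chartHeight_pos hw)
  have hc : 0 ≤ c := (abs_nonneg b).trans hb
  have h1 : ‖(b * (chartHeight w)⁻¹) • w‖ ≤ c * (2 * ν) * 1 := by
    rw [norm_smul, norm_mul, Real.norm_eq_abs, Real.norm_of_nonneg hi.le]
    have hν : 0 ≤ 2 * ν := hi.le.trans hh
    gcongr
  refine (norm_sub_le _ _).trans ?_
  linarith

lemma norm_chartCurv_le {w : E} {ν : ℝ} (hw : ‖w‖ < 1) (hh : (chartHeight w)⁻¹ ≤ 2 * ν) :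
    ‖chartCurv w‖ ≤ 16 * ν ^ 3 := by
  have hpos := chartHeight_pos hw
  have hi : 0 < (chartHeight w)⁻¹ := inv_pos.2 hpos
  have hi1 : 1 ≤ (chartHeight w)⁻¹ := (one_le_inv₀ hpos).2 (chartHeight_le_one w)
  have h1 : ‖(chartHeight w)⁻¹ • ContinuousLinearMap.id ℝ E‖ ≤ (chartHeight w)⁻¹ ^ 3 := by
    rw [norm_smul, Real.norm_of_nonneg hi.le]
    have := ContinuousLinearMap.norm_id_le (𝕜 := ℝ) (E := E)
    calc (chartHeight w)⁻¹ * ‖ContinuousLinearMap.id ℝ E‖ ≤ (chartHeight w)⁻¹ * 1 := by gcongr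
      _ = (chartHeight w)⁻¹ ^ 1 := by ring
      _ ≤ (chartHeight w)⁻¹ ^ 3 := pow_le_pow_right₀ hi1 (by norm_num)
  have h2 : ‖((chartHeight w)⁻¹ ^ 3) • InnerProductSpace.rankOne ℝ w w‖ ≤
      (chartHeight w)⁻¹ ^ 3 := by
    rw [norm_smul, Real.norm_of_nonneg (by positivity), InnerProductSpace.norm_rankOne]
    have : ‖w‖ * ‖w‖ ≤ 1 := by nlinarith [norm_nonneg w]
    exact mul_le_of_le_one_right (by positivity) this
  have h3 : (chartHeight w)⁻¹ ^ 3 ≤ (2 * ν) ^ 3 := pow_le_pow_left₀ hi.le hh 3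
  refine (norm_add_le _ _).trans ?_
  linarith

lemma norm_smul_sub_smul_le {F : Type*} [NormedAddCommGroup F] [NormedSpace ℝ F] (c c' : ℝ)
    (x x' : F) : ‖c' • x' - c • x‖ ≤ |c' - c| * ‖x'‖ + |c| * ‖x' - x‖ := by
  have h : c' • x' - c • x = (c' - c) • x' + c • (x' - x) := by module
  rw [h]
  refine (norm_add_le _ _).trans ?_
  rw [norm_smul, norm_smul, Real.norm_eq_abs, Real.norm_eq_abs]

lemma norm_rankOne_sub_rankOne_le (v v' : E) :
    ‖InnerProductSpace.rankOne ℝ v' v' - InnerProductSpace.rankOne ℝ v v‖ ≤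
      ‖v' - v‖ * (‖v'‖ + ‖v‖) := by
  have h : InnerProductSpace.rankOne ℝ v' v' - InnerProductSpace.rankOne ℝ v v =
      InnerProductSpace.rankOne ℝ (v' - v) v' + InnerProductSpace.rankOne ℝ v (v' - v) := by
    simp
  rw [h]
  refine (norm_add_le _ _).trans (le_of_eq ?_)
  rw [InnerProductSpace.norm_rankOne, InnerProductSpace.norm_rankOne]
  ring

variable {a a' w : E} {b b' μ ν t s : ℝ}

lemma abs_tanh_chartLin_le (hμ : 0 < μ) (hν : 1 ≤ ν) (hw : ‖w‖ < 1) (ha : ‖a‖ ≤ ν * t)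
    (hb : |b| ≤ t) : |Real.tanh (chartLin a b w / μ)| ≤ 2 * ν * t / μ := by
  refine (abs_tanh_le _).trans ?_
  rw [abs_div, abs_of_pos hμ]
  gcongr
  exact abs_chartLin_le hν hw ha hb

lemma abs_chartLin_div_sub_le (hμ : 0 < μ) (hν : 1 ≤ ν) (hw : ‖w‖ < 1)
    (ha : ‖a' - a‖ ≤ ν * t) (hb : |b' - b| ≤ t) :
    |chartLin a' b' w / μ - chartLin a b w / μ| ≤ 2 * ν * t / μ := by
  rw [← sub_div, chartLin_sub, abs_div, abs_of_pos hμ]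
  gcongr
  exact abs_chartLin_le hν hw ha hb

lemma norm_tanh_smul_chartGrad_sub_le (hμ : 0 < μ) (hν : 1 ≤ ν) (ht : 0 ≤ t) (hs : 0 ≤ s)
    (hs1 : s ≤ 1) (hw : ‖w‖ < 1) (hh : (chartHeight w)⁻¹ ≤ 2 * ν)
    (ha : ‖a‖ ≤ ν * t) (hb : |b| ≤ t)
    (ha' : ‖a' - a‖ ≤ ν * (t * s)) (hb' : |b' - b| ≤ t * s) :
    ‖Real.tanh (chartLin a' b' w / μ) • chartGrad a' b' w -
        Real.tanh (chartLin a b w / μ) • chartGrad a b w‖ ≤ 18 * ν ^ 2 * t ^ 2 * s / μ := by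
  have hT := (abs_tanh_sub_tanh_le _ _).trans (abs_chartLin_div_sub_le hμ hν hw ha' hb')
  have hT0 := abs_tanh_chartLin_le hμ hν hw ha hb
  have hv := norm_chartGrad_le hw hh ha hb
  have hd : ‖chartGrad a' b' w - chartGrad a b w‖ ≤ 3 * ν * (t * s) := by
    rw [chartGrad_sub]
    exact norm_chartGrad_le hw hh ha' hb'
  have hv' : ‖chartGrad a' b' w‖ ≤ 6 * ν * t := by
    have h := norm_le_norm_add_norm_sub' (chartGrad a' b' w) (chartGrad a b w)
    have : ν * (t * s) ≤ ν * t := by gcongr; nlinarith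
    linarith
  calc _ ≤ _ := norm_smul_sub_smul_le _ _ _ _
    _ ≤ 2 * ν * (t * s) / μ * (6 * ν * t) + 2 * ν * t / μ * (3 * ν * (t * s)) := by gcongr
    _ = 18 * ν ^ 2 * t ^ 2 * s / μ := by ring

lemma norm_chartHess_sub_le (hμ : 0 < μ) (hν : 1 ≤ ν) (ht : 0 ≤ t) (hs : 0 ≤ s)
    (hs1 : s ≤ 1) (hw : ‖w‖ < 1) (hh : (chartHeight w)⁻¹ ≤ 2 * ν)
    (ha : ‖a‖ ≤ ν * t) (hb : |b| ≤ t)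
    (ha' : ‖a' - a‖ ≤ ν * (t * s)) (hb' : |b' - b| ≤ t * s) :
    ‖chartHess μ a' b' w - chartHess μ a b w‖ ≤
      144 * ν ^ 3 * t ^ 3 * s / μ ^ 2 + 123 * ν ^ 4 * t ^ 2 * s / μ := by
  have hL := abs_chartLin_div_sub_le hμ hν hw ha' hb'
  have hT := (abs_tanh_sub_tanh_le _ _).trans hL
  have hT0 := abs_tanh_chartLin_le hμ hν hw ha hb
  have hv := norm_chartGrad_le hw hh ha hb
  have hd : ‖chartGrad a' b' w - chartGrad a b w‖ ≤ 3 * ν * (t * s) := by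
    rw [chartGrad_sub]
    exact norm_chartGrad_le hw hh ha' hb'
  have hv' : ‖chartGrad a' b' w‖ ≤ 6 * ν * t := by
    have h := norm_le_norm_add_norm_sub' (chartGrad a' b' w) (chartGrad a b w)
    have : ν * (t * s) ≤ ν * t := by gcongr; nlinarith
    linarith
  have hb2 : |b'| ≤ 2 * t := by
    have h := abs_add_le b (b' - b)
    rw [add_sub_cancel] at h
    nlinarith
  have hc : |(1 - Real.tanh (chartLin a' b' w / μ) ^ 2) / μ -
      (1 - Real.tanh (chartLin a b w / μ) ^ 2) / μ| ≤ 2 * (2 * ν * (t * s) / μ) / μ := by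
    rw [← sub_div, abs_div, abs_of_pos hμ]
    gcongr
    refine (abs_tanh_sq_sub_tanh_sq_le _ _).trans ?_
    gcongr
  have hc0 : |(1 - Real.tanh (chartLin a b w / μ) ^ 2) / μ| ≤ 1 / μ := by
    rw [abs_div, abs_of_pos hμ]
    gcongr
    exact abs_one_sub_tanh_sq_le_one _
  have hrank : ‖InnerProductSpace.rankOne ℝ (chartGrad a' b' w) (chartGrad a' b' w)‖ ≤
      6 * ν * t * (6 * ν * t) := by
    rw [InnerProductSpace.norm_rankOne]
    gcongr
  have hrank' := norm_rankOne_sub_rankOne_le (chartGrad a b w) (chartGrad a' b' w)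
  have hmain : ‖((1 - Real.tanh (chartLin a' b' w / μ) ^ 2) / μ) •
        InnerProductSpace.rankOne ℝ (chartGrad a' b' w) (chartGrad a' b' w) -
      ((1 - Real.tanh (chartLin a b w / μ) ^ 2) / μ) •
        InnerProductSpace.rankOne ℝ (chartGrad a b w) (chartGrad a b w)‖ ≤
      144 * ν ^ 3 * t ^ 3 * s / μ ^ 2 + 27 * ν ^ 2 * t ^ 2 * s / μ := by
    calc _ ≤ _ := norm_smul_sub_smul_le _ _ _ _
      _ ≤ 2 * (2 * ν * (t * s) / μ) / μ * (6 * ν * t * (6 * ν * t)) +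
          1 / μ * (3 * ν * (t * s) * (6 * ν * t + 3 * ν * t)) := by
        gcongr
        refine hrank'.trans ?_
        gcongr
      _ = _ := by field_simp; ring
  have hcurv : ‖(Real.tanh (chartLin a' b' w / μ) * b') • chartCurv w -
      (Real.tanh (chartLin a b w / μ) * b) • chartCurv w‖ ≤ 96 * ν ^ 4 * t ^ 2 * s / μ := by
    rw [← sub_smul, norm_smul]
    have hTb := norm_smul_sub_smul_le (Real.tanh (chartLin a b w / μ))
      (Real.tanh (chartLin a' b' w / μ)) b b'
    simp only [smul_eq_mul, Real.norm_eq_abs] at hTb ⊢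
    calc _ ≤ (2 * ν * (t * s) / μ * (2 * t) + 2 * ν * t / μ * (t * s)) * (16 * ν ^ 3) := by
          refine mul_le_mul (hTb.trans ?_) (norm_chartCurv_le hw hh) (norm_nonneg _)
            (by positivity)
          gcongr
      _ = _ := by ring
  have hν24 : 27 * ν ^ 2 * t ^ 2 * s / μ ≤ 27 * ν ^ 4 * t ^ 2 * s / μ := by
    gcongr 27 * ?_ * t ^ 2 * s / μ
    exact pow_le_pow_right₀ hν (by norm_num)
  have hsplit : chartHess μ a' b' w - chartHess μ a b w =
      (((1 - Real.tanh (chartLin a' b' w / μ) ^ 2) / μ) •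
        InnerProductSpace.rankOne ℝ (chartGrad a' b' w) (chartGrad a' b' w) -
      ((1 - Real.tanh (chartLin a b w / μ) ^ 2) / μ) •
        InnerProductSpace.rankOne ℝ (chartGrad a b w) (chartGrad a b w)) -
      ((Real.tanh (chartLin a' b' w / μ) * b') • chartCurv w -
        (Real.tanh (chartLin a b w / μ) * b) • chartCurv w) := by
    simp only [chartHess]
    abel
  rw [hsplit]
  refine (norm_sub_le _ _).trans ?_
  have : 123 * ν ^ 4 * t ^ 2 * s / μ =
    27 * ν ^ 4 * t ^ 2 * s / μ + 96 * ν ^ 4 * t ^ 2 * s / μ := by ring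
  linarith

end ChartPerturbation

section BernoulliGaussian

variable {θ : ℝ}

lemma isProbabilityMeasure_bg (hθ : θ ∈ Set.Icc (0 : ℝ) 1) : IsProbabilityMeasure (bg θ) := by
  constructor
  have h : θ.toNNReal + (1 - θ).toNNReal = 1 := by
    rw [← Real.toNNReal_add hθ.1 (by linarith [hθ.2])]
    simp
  simp only [bg, Measure.add_apply, Measure.smul_apply, measure_univ, ENNReal.smul_def,
    smul_eq_mul, mul_one]
  exact_mod_cast h

lemma isProbabilityMeasure_bgMatrix (hθ : θ ∈ Set.Icc (0 : ℝ) 1) (n p : ℕ) :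
    IsProbabilityMeasure (bgMatrix θ n p) := by
  have := isProbabilityMeasure_bg hθ
  unfold bgMatrix
  infer_instance

lemma integrable_exp_mul_bg (c : ℝ) : Integrable (fun x => Real.exp (c * x)) (bg θ) := by
  refine Integrable.add_measure ?_ ?_
  · exact (integrable_exp_mul_gaussianReal c).smul_measure_nnreal
  · exact (integrable_dirac (by simp)).smul_measure_nnreal

lemma integral_exp_mul_bg (hθ : θ ∈ Set.Icc (0 : ℝ) 1) (c : ℝ) :
    ∫ x, Real.exp (c * x) ∂(bg θ) = 1 + θ * (Real.exp (c ^ 2 / 2) - 1) := by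
  have hg : ∫ x, Real.exp (c * x) ∂(gaussianReal 0 1) = Real.exp (c ^ 2 / 2) := by
    have h := congrFun (mgf_id_gaussianReal (μ := 0) (v := 1)) c
    simpa [mgf] using h
  rw [bg, integral_add_measure (integrable_exp_mul_gaussianReal c).smul_measure_nnreal
    (integrable_dirac (by simp)).smul_measure_nnreal, integral_smul_nnreal_measure,
    integral_smul_nnreal_measure, hg, integral_dirac]
  simp only [NNReal.smul_def, Real.coe_toNNReal _ hθ.1,
    Real.coe_toNNReal _ (by linarith [hθ.2] : 0 ≤ 1 - θ), smul_eq_mul, mul_zero, Real.exp_zero]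
  ring

lemma integrable_exp_mul_column (hθ : θ ∈ Set.Icc (0 : ℝ) 1) {n p : ℕ} (c : Fin n → ℝ)
    (k : Fin p) :
    Integrable (fun X : Fin n → Fin p → ℝ => Real.exp (∑ i, c i * X i k)) (bgMatrix θ n p) := by
  have := isProbabilityMeasure_bg hθ
  simp_rw [Real.exp_sum]
  exact Integrable.fintype_prod_dep (f := fun i (x : Fin p → ℝ) => Real.exp (c i * x k))
    fun i => (measurePreserving_eval (fun _ : Fin p => bg θ) k).integrable_comp_of_integrable
      (integrable_exp_mul_bg (c i))

lemma integral_exp_mul_column (hθ : θ ∈ Set.Icc (0 : ℝ) 1) {n p : ℕ} (c : Fin n → ℝ)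
    (k : Fin p) :
    ∫ X, Real.exp (∑ i, c i * X i k) ∂(bgMatrix θ n p) =
      ∏ i, (1 + θ * (Real.exp (c i ^ 2 / 2) - 1)) := by
  have := isProbabilityMeasure_bg hθ
  simp_rw [Real.exp_sum]
  unfold bgMatrix
  rw [integral_fintype_prod_eq_prod (fun i (x : Fin p → ℝ) => Real.exp (c i * x k))]
  refine Finset.prod_congr rfl fun i _ => ?_
  have h := integral_map (μ := Measure.pi fun _ : Fin p => bg θ) (φ := Function.eval k)
    (measurable_pi_apply k).aemeasurable (f := fun x => Real.exp (c i * x)) (by fun_prop)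
  rw [(measurePreserving_eval (fun _ : Fin p => bg θ) k).map_eq, integral_exp_mul_bg hθ] at h
  exact h.symm

lemma prod_one_add_mul_le {ι : Type*} (S : Finset ι) (hθ : θ ∈ Set.Icc (0 : ℝ) 1) {a : ι → ℝ}
    (ha : ∀ i, 0 ≤ a i) :
    ∏ i ∈ S, (1 + θ * a i) ≤ 1 + θ * (∏ i ∈ S, (1 + a i) - 1) := by
  classical
  obtain ⟨h0, h1⟩ := hθ
  induction S using Finset.induction_on with
  | empty => simp
  | insert j S hj ih =>
    rw [Finset.prod_insert hj, Finset.prod_insert hj]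
    have hP : 1 ≤ ∏ i ∈ S, (1 + a i) := by
      simpa using Finset.prod_le_prod (s := S) (f := fun _ => (1 : ℝ)) (g := fun i => 1 + a i)
        (fun _ _ => zero_le_one) fun i _ => by linarith [ha i]
    set P := ∏ i ∈ S, (1 + a i)
    calc (1 + θ * a j) * ∏ i ∈ S, (1 + θ * a i) ≤ (1 + θ * a j) * (1 + θ * (P - 1)) := by
          have := ha j
          gcongr
      _ ≤ 1 + θ * ((1 + a j) * P - 1) := by
          nlinarith [mul_nonneg (mul_nonneg h0 (ha j)) (mul_nonneg (sub_nonneg.2 hP)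
            (sub_nonneg.2 h1))]

lemma integral_exp_mul_column_le (hθ : θ ∈ Set.Icc (0 : ℝ) 1) {n p : ℕ} (c : Fin n → ℝ)
    (k : Fin p) :
    ∫ X, Real.exp (∑ i, c i * X i k) ∂(bgMatrix θ n p) ≤
      1 + θ * (Real.exp ((∑ i, c i ^ 2) / 2) - 1) := by
  rw [integral_exp_mul_column hθ]
  refine (prod_one_add_mul_le _ hθ fun i => ?_).trans (le_of_eq ?_)
  · linarith [Real.add_one_le_exp (c i ^ 2 / 2), sq_nonneg (c i)]
  · simp_rw [add_sub_cancel, ← Real.exp_sum, Finset.sum_div]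

lemma integrable_cosh_column_sub_one (hθ : θ ∈ Set.Icc (0 : ℝ) 1) {n p : ℕ} (c : Fin n → ℝ)
    (k : Fin p) :
    Integrable (fun X : Fin n → Fin p → ℝ => Real.cosh (∑ i, c i * X i k) - 1)
      (bgMatrix θ n p) := by
  have := isProbabilityMeasure_bgMatrix hθ n p
  simp_rw [Real.cosh_eq, ← Finset.sum_neg_distrib, ← neg_mul]
  exact (((integrable_exp_mul_column hθ c k).add
    (integrable_exp_mul_column hθ (fun i => -c i) k)).div_const 2).sub (integrable_const 1)

lemma integral_cosh_column_sub_one_le (hθ : θ ∈ Set.Icc (0 : ℝ) 1) {n p : ℕ} (c : Fin n → ℝ)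
    (k : Fin p) :
    ∫ X, (Real.cosh (∑ i, c i * X i k) - 1) ∂(bgMatrix θ n p) ≤
      θ * (Real.exp ((∑ i, c i ^ 2) / 2) - 1) := by
  have := isProbabilityMeasure_bgMatrix hθ n p
  have h1 := integrable_exp_mul_column hθ c k
  have h2 := integrable_exp_mul_column hθ (fun i => -c i) k
  have h3 := integral_exp_mul_column_le hθ c k
  have h4 := integral_exp_mul_column_le hθ (fun i => -c i) k
  have h12 : Integrable (fun X : Fin n → Fin p → ℝ => (Real.exp (∑ i, c i * X i k) +
      Real.exp (∑ i, -c i * X i k)) / 2) (bgMatrix θ n p) := (h1.add h2).div_const 2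
  simp_rw [Real.cosh_eq, ← Finset.sum_neg_distrib, ← neg_mul]
  rw [integral_sub h12 (integrable_const 1), integral_div,
    integral_add h1 h2]
  simp only [neg_sq] at h4
  simp only [integral_const, probReal_univ, smul_eq_mul, mul_one]
  linarith

/-- Sub-Gaussian tail of a fixed linear combination of a column, with the sparsity factor `θ`. -/
lemma bgMatrix_real_lt_abs_column_le (hθ : θ ∈ Set.Icc (0 : ℝ) 1) {n p : ℕ} (ξ : Fin n → ℝ)
    (k : Fin p) {σ t : ℝ} (hσ : 0 ≤ σ) (hξ : ∑ i, ξ i ^ 2 ≤ σ ^ 2) (ht : 0 ≤ t)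
    (ht4 : 4 ≤ Real.exp (t ^ 2)) :
    (bgMatrix θ n p).real {X | σ * t < |∑ i, ξ i * X i k|} ≤
      θ * (4 * Real.exp (-(t ^ 2 / 2))) := by
  have := isProbabilityMeasure_bgMatrix hθ n p
  have hθ0 := hθ.1
  rcases hσ.eq_or_lt with rfl | hσ
  · have hz : ∀ i, ξ i = 0 := by
      have h0 : ∑ i, ξ i ^ 2 = 0 :=
        le_antisymm (by simpa using hξ) (Finset.sum_nonneg fun i _ => sq_nonneg _)
      intro i
      have := (Finset.sum_eq_zero_iff_of_nonneg fun i _ => sq_nonneg (ξ i)).1 h0 i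
        (Finset.mem_univ i)
      simpa using this
    simp only [hz, zero_mul, Finset.sum_const_zero, abs_zero, lt_self_iff_false,
      Set.ofPred_false, measureReal_empty]
    positivity
  have hmarkov := mul_meas_ge_le_integral_of_nonneg (μ := bgMatrix θ n p)
    (Filter.Eventually.of_forall fun X => sub_nonneg.2 (Real.one_le_cosh _))
    (integrable_cosh_column_sub_one hθ (fun i => t / σ * ξ i) k) (Real.cosh (t ^ 2) - 1)
  have hmean := integral_cosh_column_sub_one_le hθ (fun i => t / σ * ξ i) k
  have hvar : ∑ i, (t / σ * ξ i) ^ 2 ≤ t ^ 2 := by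
    simp_rw [mul_pow]
    rw [← Finset.mul_sum]
    calc (t / σ) ^ 2 * ∑ i, ξ i ^ 2 ≤ (t / σ) ^ 2 * σ ^ 2 := by gcongr
      _ = t ^ 2 := by field_simp
  have hsub : {X : Fin n → Fin p → ℝ | σ * t < |∑ i, ξ i * X i k|} ⊆
      {X | Real.cosh (t ^ 2) - 1 ≤ Real.cosh (∑ i, t / σ * ξ i * X i k) - 1} := by
    intro X hX
    simp only [Set.mem_ofPred_eq] at hX ⊢
    gcongr
    rw [Real.cosh_le_cosh, abs_of_nonneg (sq_nonneg t)]
    simp_rw [mul_assoc]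
    rw [← Finset.mul_sum, abs_mul, abs_of_nonneg (by positivity)]
    calc t ^ 2 = t / σ * (σ * t) := by field_simp
      _ ≤ _ := by gcongr
  have hmono := measureReal_mono (μ := bgMatrix θ n p) hsub
  have hz : Real.exp (t ^ 2) = Real.exp (t ^ 2 / 2) ^ 2 := by
    rw [← Real.exp_nat_mul]
    congr 1
    push_cast
    ring
  have hcosh : Real.exp (t ^ 2 / 2) ^ 2 / 4 ≤ Real.cosh (t ^ 2) - 1 := by
    rw [Real.cosh_eq]
    linarith [Real.exp_pos (-t ^ 2)]
  set z := Real.exp (t ^ 2 / 2)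
  have hzpos : 0 < z := Real.exp_pos _
  have hexp : Real.exp ((∑ i, (t / σ * ξ i) ^ 2) / 2) ≤ z := by
    apply Real.exp_le_exp.2
    linarith
  set P := (bgMatrix θ n p).real {X | σ * t < |∑ i, ξ i * X i k|}
  have hP : 0 ≤ P := measureReal_nonneg
  have hfinal : z ^ 2 / 4 * P ≤ θ * z := by
    calc z ^ 2 / 4 * P ≤ (Real.cosh (t ^ 2) - 1) * P := by gcongr
      _ ≤ _ := mul_le_mul_of_nonneg_left hmono (sub_nonneg.2 (Real.one_le_cosh _))
      _ ≤ _ := hmarkov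
      _ ≤ _ := hmean
      _ ≤ θ * z := by gcongr; linarith
  rw [Real.exp_neg]
  calc P = (z ^ 2 / 4 * P) * (4 / z ^ 2) := by field_simp
    _ ≤ θ * z * (4 / z ^ 2) := by gcongr
    _ = θ * (4 * z⁻¹) := by field_simp

end BernoulliGaussian

section Columns

variable {m p : ℕ}

/-- All entries of the `k`-th column except the last one. -/
def columnHead (Y : Matrix (Fin (m + 1)) (Fin p) ℝ) (k : Fin p) :
    EuclideanSpace ℝ (Fin (m + 1 - 1)) :=
  WithLp.toLp 2 fun i : Fin m => Y i.castSucc k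

lemma gfun_eq_chartObj (μ : ℝ) (Y : Matrix (Fin (m + 1)) (Fin p) ℝ) :
    gfun (m + 1) p μ Y = chartObj μ (columnHead Y) fun k => Y (Fin.last m) k := by
  funext w
  unfold gfun chartObj
  congr 1
  refine Finset.sum_congr rfl fun k _ => congrArg _ ?_
  rw [Fin.sum_univ_castSucc]
  have h1 : ∀ i : Fin m, qmap (m + 1) w i.castSucc = w i := fun i => by
    simp [qmap]
  have h2 : qmap (m + 1) w (Fin.last m) = chartHeight w := by
    simp [qmap, chartHeight]
  simp only [h1, h2, chartLin, columnHead, PiLp.inner_apply]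
  rfl

lemma norm_columnHead_le (Y : Matrix (Fin (m + 1)) (Fin p) ℝ) (k : Fin p) :
    ‖columnHead Y k‖ ≤ ‖WithLp.toLp 2 (fun i => Y i k)‖ := by
  rw [EuclideanSpace.norm_eq, EuclideanSpace.norm_eq]
  refine Real.sqrt_le_sqrt ?_
  rw [Fin.sum_univ_castSucc]
  exact le_add_of_nonneg_right (sq_nonneg _)

lemma norm_toLp_le_sqrt_mul {n : ℕ} {x : Fin n → ℝ} {t : ℝ} (ht : 0 ≤ t) (hx : ∀ i, |x i| ≤ t) :
    ‖WithLp.toLp 2 x‖ ≤ √n * t := by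
  rw [EuclideanSpace.norm_eq]
  refine Real.sqrt_le_iff.2 ⟨by positivity, ?_⟩
  calc ∑ i, ‖x i‖ ^ 2 ≤ ∑ _i : Fin n, t ^ 2 := by
        refine Finset.sum_le_sum fun i _ => ?_
        exact pow_le_pow_left₀ (norm_nonneg _) (hx i) 2
    _ = (√n * t) ^ 2 := by
        rw [mul_pow, Real.sq_sqrt (Nat.cast_nonneg n)]
        simp

lemma specNorm_nonneg {n k : ℕ} (M : Matrix (Fin n) (Fin k) ℝ) : 0 ≤ specNorm M :=
  norm_nonneg _

lemma norm_mulVec_le {n k : ℕ} (M : Matrix (Fin n) (Fin k) ℝ) (x : Fin k → ℝ) :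
    ‖WithLp.toLp 2 (M *ᵥ x)‖ ≤ specNorm M * ‖WithLp.toLp 2 x‖ :=
  (LinearMap.toContinuousLinearMap (Matrix.toEuclideanLin M)).le_opNorm (WithLp.toLp 2 x)

lemma sum_sq_row_le_specNorm_sq {n k : ℕ} (M : Matrix (Fin n) (Fin k) ℝ) (i : Fin n) :
    ∑ j, M i j ^ 2 ≤ specNorm M ^ 2 := by
  have hnorm : ‖WithLp.toLp 2 (M i)‖ ^ 2 = ∑ j, M i j ^ 2 := by
    simp [EuclideanSpace.norm_sq_eq]
  have happ : ‖WithLp.toLp 2 (M i)‖ ^ 2 ≤ specNorm M * ‖WithLp.toLp 2 (M i)‖ := by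
    refine le_trans ?_ (norm_mulVec_le M (M i))
    refine le_trans (le_of_eq ?_) ((le_abs_self _).trans
      (PiLp.norm_apply_le (WithLp.toLp 2 (M *ᵥ M i)) i))
    rw [hnorm]
    simp [Matrix.mulVec, dotProduct, sq]
  have hle : ‖WithLp.toLp 2 (M i)‖ ≤ specNorm M := by
    rcases (norm_nonneg (WithLp.toLp 2 (M i))).eq_or_lt with h | h
    · rw [← h]
      exact specNorm_nonneg M
    · rw [sq] at happ
      exact le_of_mul_le_mul_right happ h
  rw [← hnorm]
  exact pow_le_pow_left₀ (norm_nonneg _) hle 2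

lemma norm_lt_one_of_mem_GammaSet {n : ℕ} {w : EuclideanSpace ℝ (Fin (n - 1))} (hn : n ≠ 0)
    (hw : w ∈ GammaSet n) : ‖w‖ < 1 := by
  have hn' : (0 : ℝ) < n := by positivity
  refine lt_of_lt_of_le hw (Real.sqrt_le_one.2 ?_)
  rw [div_le_one (by positivity)]
  linarith

lemma inv_chartHeight_le_of_mem_GammaSet {n : ℕ} {w : EuclideanSpace ℝ (Fin (n - 1))}
    (hn : n ≠ 0) (hw : w ∈ GammaSet n) : (chartHeight w)⁻¹ ≤ 2 * √n := by
  have hn' : (0 : ℝ) < n := by positivity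
  have hsq := Real.lt_sqrt (norm_nonneg w) |>.1 hw
  have h1 : (2 * √n)⁻¹ ≤ chartHeight w := by
    refine Real.le_sqrt_of_sq_le ?_
    have h2 : ((2 * √n)⁻¹) ^ 2 = 1 - (4 * (n : ℝ) - 1) / (4 * n) := by
      rw [inv_pow, mul_pow, Real.sq_sqrt hn'.le]
      field_simp
      ring
    linarith
  exact inv_le_of_inv_le₀ (by positivity) h1

variable {μ t : ℝ} {Ξ : Matrix (Fin (m + 1)) (Fin (m + 1)) ℝ}
  {X : Matrix (Fin (m + 1)) (Fin p) ℝ} {w : EuclideanSpace ℝ (Fin (m + 1 - 1))}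

lemma norm_columnHead_le_of_entry_le (ht : 0 ≤ t) (hX : ∀ i k, |X i k| ≤ t) (k : Fin p) :
    ‖columnHead X k‖ ≤ √(m + 1 : ℕ) * t :=
  (norm_columnHead_le X k).trans (norm_toLp_le_sqrt_mul ht fun i => hX i k)

lemma norm_columnHead_perturbation_le (ht : 0 ≤ t) (hX : ∀ i k, |X i k| ≤ t) (k : Fin p) :
    ‖columnHead (X + Ξ * X) k - columnHead X k‖ ≤ √(m + 1 : ℕ) * (t * specNorm Ξ) := by
  have h1 : columnHead (X + Ξ * X) k - columnHead X k = columnHead (Ξ * X) k := by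
    ext i
    simp [columnHead]
  have h2 : (fun i => (Ξ * X) i k) = Ξ *ᵥ fun i => X i k := by
    funext i
    simp [Matrix.mul_apply, Matrix.mulVec, dotProduct]
  rw [h1]
  refine (norm_columnHead_le _ k).trans ?_
  rw [h2]
  refine (norm_mulVec_le _ _).trans ?_
  have h3 := norm_toLp_le_sqrt_mul ht fun i => hX i k
  have h4 := specNorm_nonneg Ξ
  calc specNorm Ξ * _ ≤ specNorm Ξ * (√(m + 1 : ℕ) * t) := by gcongr
    _ = _ := by ring

lemma abs_last_perturbation_le
    (hΞ : ∀ k, |∑ i, Ξ (Fin.last m) i * X i k| ≤ specNorm Ξ * t) (k : Fin p) :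
    |(X + Ξ * X) (Fin.last m) k - X (Fin.last m) k| ≤ t * specNorm Ξ := by
  rw [Matrix.add_apply, add_sub_cancel_left, Matrix.mul_apply, mul_comm t]
  exact hΞ k

lemma norm_gradg_sub_le (hμ : 0 < μ) (ht : 0 ≤ t) (hs : specNorm Ξ ≤ 1)
    (hX : ∀ i k, |X i k| ≤ t) (hΞ : ∀ k, |∑ i, Ξ (Fin.last m) i * X i k| ≤ specNorm Ξ * t)
    (hw : w ∈ GammaSet (m + 1)) :
    ‖gradg (m + 1) p μ (X + Ξ * X) w - gradg (m + 1) p μ X w‖ ≤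
      18 * √(m + 1 : ℕ) ^ 2 * t ^ 2 * specNorm Ξ / μ := by
  have hs0 := specNorm_nonneg Ξ
  have hw1 := norm_lt_one_of_mem_GammaSet m.succ_ne_zero hw
  simp only [gradg, gfun_eq_chartObj]
  rw [gradient_chartObj hμ.ne' _ _ hw1, gradient_chartObj hμ.ne' _ _ hw1]
  refine norm_inv_smul_sum_sub_le _ _ (by positivity) fun k => ?_
  exact norm_tanh_smul_chartGrad_sub_le hμ (Real.one_le_sqrt.2 (by simp)) ht hs0 hs hw1
    (inv_chartHeight_le_of_mem_GammaSet m.succ_ne_zero hw)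
    (norm_columnHead_le_of_entry_le ht hX k) (hX _ k)
    (norm_columnHead_perturbation_le ht hX k) (abs_last_perturbation_le hΞ k)

lemma norm_hessg_sub_le (hμ : 0 < μ) (ht : 0 ≤ t) (hs : specNorm Ξ ≤ 1)
    (hX : ∀ i k, |X i k| ≤ t) (hΞ : ∀ k, |∑ i, Ξ (Fin.last m) i * X i k| ≤ specNorm Ξ * t)
    (hw : w ∈ GammaSet (m + 1)) :
    ‖hessg (m + 1) p μ (X + Ξ * X) w - hessg (m + 1) p μ X w‖ ≤
      144 * √(m + 1 : ℕ) ^ 3 * t ^ 3 * specNorm Ξ / μ ^ 2 +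
        123 * √(m + 1 : ℕ) ^ 4 * t ^ 2 * specNorm Ξ / μ := by
  have hs0 := specNorm_nonneg Ξ
  have hw1 := norm_lt_one_of_mem_GammaSet m.succ_ne_zero hw
  have hfun : ∀ Y : Matrix (Fin (m + 1)) (Fin p) ℝ, gradg (m + 1) p μ Y =
      gradient (chartObj μ (columnHead Y) fun k => Y (Fin.last m) k) := fun Y => by
    funext v
    rw [gradg, gfun_eq_chartObj]
  rw [hessg, hessg, hfun, hfun, fderiv_gradient_chartObj hμ.ne' _ _ hw1,
    fderiv_gradient_chartObj hμ.ne' _ _ hw1]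
  refine norm_inv_smul_sum_sub_le _ _ (by positivity) fun k => ?_
  exact norm_chartHess_sub_le hμ (Real.one_le_sqrt.2 (by simp)) ht hs0 hs hw1
    (inv_chartHeight_le_of_mem_GammaSet m.succ_ne_zero hw)
    (norm_columnHead_le_of_entry_le ht hX k) (hX _ k)
    (norm_columnHead_perturbation_le ht hX k) (abs_last_perturbation_le hΞ k)

/-- With high probability all entries of the matrix, and all coordinates in a fixed direction `ξ`,
are of order `√(log (np))`. -/
lemma bgMatrix_real_not_bounded_le {θ : ℝ} (hθ : θ ∈ Set.Icc (0 : ℝ) 1) {n p : ℕ}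
    (hn : n ≠ 0) (hnp : (2 : ℝ) ≤ n * p) {ξ : Fin n → ℝ} {σ : ℝ} (hσ : 0 ≤ σ)
    (hξ : ∑ i, ξ i ^ 2 ≤ σ ^ 2) {t : ℝ} (ht : 0 ≤ t) (ht2 : t ^ 2 = 36 * Real.log (n * p)) :
    (bgMatrix θ n p).real {X | ¬((∀ i k, |X i k| ≤ t) ∧ ∀ k, |∑ i, ξ i * X i k| ≤ σ * t)} ≤
      θ / ((n : ℝ) * p) ^ 7 := by
  have := isProbabilityMeasure_bgMatrix hθ n p
  have hθ0 := hθ.1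
  have hN0 : (0 : ℝ) < n * p := by linarith
  have hexp : Real.exp (t ^ 2) = ((n : ℝ) * p) ^ 36 := by
    rw [ht2, show 36 * Real.log ((n : ℝ) * p) = (36 : ℕ) * Real.log (n * p) by norm_num,
      Real.exp_nat_mul, Real.exp_log hN0]
  have hexp2 : Real.exp (-(t ^ 2 / 2)) = (((n : ℝ) * p) ^ 18)⁻¹ := by
    rw [ht2, show -(36 * Real.log ((n : ℝ) * p) / 2) = -((18 : ℕ) * Real.log (n * p)) by
      push_cast; ring, Real.exp_neg, Real.exp_nat_mul, Real.exp_log hN0]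
  have ht4 : 4 ≤ Real.exp (t ^ 2) := by
    rw [hexp]
    calc (4 : ℝ) ≤ 2 ^ 36 := by norm_num
      _ ≤ _ := pow_le_pow_left₀ zero_le_two hnp 36
  have hentry : ∀ ik : Fin n × Fin p, (bgMatrix θ n p).real {X | t < |X ik.1 ik.2|} ≤
      θ * (4 * (((n : ℝ) * p) ^ 18)⁻¹) := fun ik => by
    have h := bgMatrix_real_lt_abs_column_le hθ (Pi.single ik.1 (1 : ℝ)) ik.2 zero_le_one
      (by simp [Pi.single_apply]) ht ht4
    simpa [Pi.single_apply, hexp2] using h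
  have hdir : ∀ k : Fin p, (bgMatrix θ n p).real {X | σ * t < |∑ i, ξ i * X i k|} ≤
      θ * (4 * (((n : ℝ) * p) ^ 18)⁻¹) := fun k => by
    rw [← hexp2]
    exact bgMatrix_real_lt_abs_column_le hθ ξ k hσ hξ ht ht4
  have hsub : {X : Fin n → Fin p → ℝ |
      ¬((∀ i k, |X i k| ≤ t) ∧ ∀ k, |∑ i, ξ i * X i k| ≤ σ * t)} ⊆
      (⋃ ik : Fin n × Fin p, {X | t < |X ik.1 ik.2|}) ∪
        ⋃ k : Fin p, {X | σ * t < |∑ i, ξ i * X i k|} := by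
    intro X hX
    simp only [Set.mem_ofPred_eq, not_and_or, not_forall, not_le] at hX
    rcases hX with ⟨i, k, h⟩ | ⟨k, h⟩
    · exact Or.inl (Set.mem_iUnion.2 ⟨(i, k), h⟩)
    · exact Or.inr (Set.mem_iUnion.2 ⟨k, h⟩)
  have hpn : (p : ℝ) ≤ n * p :=
    le_mul_of_one_le_left (Nat.cast_nonneg p) (by exact_mod_cast Nat.one_le_iff_ne_zero.2 hn)
  calc _ ≤ _ := measureReal_mono hsub
    _ ≤ _ := measureReal_union_le _ _
    _ ≤ (∑ ik : Fin n × Fin p, (bgMatrix θ n p).real {X | t < |X ik.1 ik.2|}) +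
        ∑ k : Fin p, (bgMatrix θ n p).real {X | σ * t < |∑ i, ξ i * X i k|} :=
      add_le_add (measureReal_iUnion_fintype_le _) (measureReal_iUnion_fintype_le _)
    _ ≤ n * p * (θ * (4 * (((n : ℝ) * p) ^ 18)⁻¹)) + p * (θ * (4 * (((n : ℝ) * p) ^ 18)⁻¹)) := by
      refine add_le_add ((Finset.sum_le_sum fun ik _ => hentry ik).trans (le_of_eq ?_))
        ((Finset.sum_le_sum fun k _ => hdir k).trans (le_of_eq ?_)) <;> simp
    _ ≤ n * p * (θ * (4 * (((n : ℝ) * p) ^ 18)⁻¹)) +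
        n * p * (θ * (4 * (((n : ℝ) * p) ^ 18)⁻¹)) := by gcongr
    _ = 8 / ((n : ℝ) * p) ^ 10 * (θ / ((n : ℝ) * p) ^ 7) := by
      field_simp
      ring
    _ ≤ 1 * (θ / ((n : ℝ) * p) ^ 7) := by
      gcongr
      rw [div_le_one (by positivity)]
      calc (8 : ℝ) ≤ 2 ^ 10 := by norm_num
        _ ≤ _ := pow_le_pow_left₀ zero_le_two hnp 10
    _ = _ := one_mul _

lemma rpow_three_halves {x : ℝ} (hx : 0 ≤ x) : x ^ ((3 : ℝ) / 2) = √x ^ 3 := by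
  rw [Real.sqrt_eq_rpow, ← Real.rpow_natCast, ← Real.rpow_mul hx]
  norm_num

end Columns

/-- Lemma: perturbation bounds for gradient and Hessian under
a small multiplicative perturbation of the data. -/
theorem statement14 :
    ∃ Ca Cb : ℝ, 0 < Ca ∧ 0 < Cb ∧
      ∀ (n p : ℕ) (θ μ : ℝ) (Ξ : Matrix (Fin n) (Fin n) ℝ),
        θ ∈ Set.Ioo (0 : ℝ) 1 → 0 < μ → specNorm Ξ ≤ 1 / (2 * n) →
        ENNReal.ofReal
            (1 - θ / ((n : ℝ) * p) ^ 7 - Real.exp (-(0.3 * θ * n * p))) ≤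
          bgMatrix θ n p
            {X | ∀ w ∈ GammaSet n,
                 ‖gradg n p μ (Matrix.of X + Ξ * Matrix.of X) w -
                    gradg n p μ (Matrix.of X) w‖ ≤
                   Ca * ((n : ℝ) / μ) * Real.log ((n : ℝ) * p) * specNorm Ξ ∧
                 ‖hessg n p μ (Matrix.of X + Ξ * Matrix.of X) w -
                    hessg n p μ (Matrix.of X) w‖ ≤
                   Cb * max ((n : ℝ) ^ ((3 : ℝ) / 2) / μ ^ 2) ((n : ℝ) ^ 2 / μ) *
                     Real.log ((n : ℝ) * p) ^ ((3 : ℝ) / 2) * specNorm Ξ} := by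
  refine ⟨648, 57672, by norm_num, by norm_num, fun n p θ μ Ξ hθ hμ hΞ => ?_⟩
  have hθ' : θ ∈ Set.Icc (0 : ℝ) 1 := ⟨hθ.1.le, hθ.2.le⟩
  rcases Nat.lt_or_ge (n * p) 2 with hsmall | hlarge
  · have hneg : 1 - θ / ((n : ℝ) * p) ^ 7 - Real.exp (-(0.3 * θ * n * p)) ≤ 0 := by
      have hcast : (n : ℝ) * p = ((n * p : ℕ) : ℝ) := by push_cast; ring
      rw [mul_assoc, hcast]
      have h01 : n * p = 0 ∨ n * p = 1 := by omega
      rcases h01 with h | h <;> rw [h]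
      · simp
      · have := Real.add_one_le_exp (-(0.3 * θ))
        simp only [Nat.cast_one, one_pow, div_one, mul_one]
        linarith [hθ.1]
    rw [ENNReal.ofReal_of_nonpos hneg]
    exact zero_le
  obtain ⟨m, rfl⟩ : ∃ m, n = m + 1 := Nat.exists_eq_succ_of_ne_zero (by rintro rfl; simp at hlarge)
  have hnp : (2 : ℝ) ≤ ((m + 1 : ℕ) : ℝ) * p := by exact_mod_cast hlarge
  have hs0 := specNorm_nonneg Ξ
  have hs1 : specNorm Ξ ≤ 1 := by
    refine hΞ.trans ?_
    rw [div_le_one (by positivity)]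
    push_cast
    linarith [(Nat.cast_nonneg m : (0 : ℝ) ≤ m)]
  set ℓ := Real.log (((m + 1 : ℕ) : ℝ) * p) with hℓ
  have hℓ1 : 1 / 36 ≤ ℓ := by
    have h := Real.log_le_log zero_lt_two hnp
    linarith [Real.log_two_gt_d9]
  have ht1 : 1 ≤ 6 * √ℓ := by
    have h := Real.le_sqrt_of_sq_le (show (1 / 6 : ℝ) ^ 2 ≤ ℓ by linarith)
    linarith
  have ht2 : (6 * √ℓ) ^ 2 = 36 * ℓ := by
    rw [mul_pow, Real.sq_sqrt (by linarith)]
    norm_num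
  have hbad := bgMatrix_real_not_bounded_le hθ' m.succ_ne_zero hnp hs0
    (sum_sq_row_le_specNorm_sq Ξ (Fin.last m)) (by positivity) ht2
  have hprob := isProbabilityMeasure_bgMatrix hθ' (m + 1) p
  refine (ENNReal.ofReal_le_ofReal ?_).trans (ENNReal.ofReal_toReal_le (a := bgMatrix θ (m + 1) p
    {X | (∀ i k, |X i k| ≤ 6 * √ℓ) ∧
      ∀ k, |∑ i, Ξ (Fin.last m) i * X i k| ≤ specNorm Ξ * (6 * √ℓ)})) |>.trans
    (measure_mono fun X hX w hw => ?_)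
  · have hone := measureReal_union_le (μ := bgMatrix θ (m + 1) p)
      {X | (∀ i k, |X i k| ≤ 6 * √ℓ) ∧
        ∀ k, |∑ i, Ξ (Fin.last m) i * X i k| ≤ specNorm Ξ * (6 * √ℓ)}
      {X | ¬((∀ i k, |X i k| ≤ 6 * √ℓ) ∧
        ∀ k, |∑ i, Ξ (Fin.last m) i * X i k| ≤ specNorm Ξ * (6 * √ℓ))}
    rw [show ∀ P : (Fin (m + 1) → Fin p → ℝ) → Prop, {X | P X} ∪ {X | ¬P X} = Set.univ from
      fun P => Set.union_compl_self {X | P X}, probReal_univ] at hone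
    rw [measureReal_def] at hone
    linarith [Real.exp_pos (-(0.3 * θ * (m + 1 : ℕ) * p))]
  obtain ⟨hX, hΞX⟩ := hX
  constructor
  · refine (norm_gradg_sub_le (X := Matrix.of X) hμ (by positivity) hs1 hX hΞX hw).trans
      (le_of_eq ?_)
    rw [ht2, Real.sq_sqrt (Nat.cast_nonneg _)]
    ring
  · refine (norm_hessg_sub_le (X := Matrix.of X) hμ (by positivity) hs1 hX hΞX hw).trans ?_
    rw [rpow_three_halves (Nat.cast_nonneg (m + 1)), rpow_three_halves (by linarith : 0 ≤ ℓ)]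
    have hν4 : √((m + 1 : ℕ) : ℝ) ^ 4 = ((m + 1 : ℕ) : ℝ) ^ 2 := by
      rw [show √((m + 1 : ℕ) : ℝ) ^ 4 = (√((m + 1 : ℕ) : ℝ) ^ 2) ^ 2 by ring,
        Real.sq_sqrt (Nat.cast_nonneg _)]
    have ht23 : (6 * √ℓ) ^ 2 ≤ (6 * √ℓ) ^ 3 := pow_le_pow_right₀ ht1 (by norm_num)
    rw [hν4]
    set A := √((m + 1 : ℕ) : ℝ) ^ 3 / μ ^ 2
    set B := ((m + 1 : ℕ) : ℝ) ^ 2 / μ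
    calc 144 * √((m + 1 : ℕ) : ℝ) ^ 3 * (6 * √ℓ) ^ 3 * specNorm Ξ / μ ^ 2 +
          123 * ((m + 1 : ℕ) : ℝ) ^ 2 * (6 * √ℓ) ^ 2 * specNorm Ξ / μ
        = 144 * A * (6 * √ℓ) ^ 3 * specNorm Ξ + 123 * B * (6 * √ℓ) ^ 2 * specNorm Ξ := by
          simp only [A, B]
          ring
      _ ≤ 144 * max A B * (6 * √ℓ) ^ 3 * specNorm Ξ +
          123 * max A B * (6 * √ℓ) ^ 3 * specNorm Ξ := by
          gcongr
          · exact le_max_left _ _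
          · exact le_max_right _ _
      _ = 57672 * max A B * √ℓ ^ 3 * specNorm Ξ := by ring

end
end

section
/- Let X ~ N(0, σ_X²) and Y ~ N(0, σ_Y²) be independent real Gaussian random variables with σ_X, σ_Y > 0, and let μ > 0. Then E[ (1 − tanh²((X+Y)/μ)) · X² · 1{X+Y > 0} ] ≤ (1/√(2π)) · μ σ_X² σ_Y² / (σ_X² + σ_Y²)^{3/2} + (3/(4√(2π))) · (σ_X² μ³ / (σ_X² + σ_Y²)^{5/2}) · (3μ² + 4σ_X²). -/
open MeasureTheory ProbabilityTheory Real Matrix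
open scoped RealInnerProductSpace ENNReal NNReal

noncomputable section

/-- If `X ∼ N(0, u)` and `Y ∼ N(0, v)` are independent, then `X + Y` is independent of the residual
`v X - u Y` of the regression of `X` on `X + Y`. -/
lemma indepFun_add_residual_gaussianReal_prod (u v : ℝ≥0) :
    IndepFun (fun p : ℝ × ℝ ↦ p.1 + p.2) (fun p ↦ v * p.1 - u * p.2)
      ((gaussianReal 0 u).prod (gaussianReal 0 v)) := by
  have hlaw : HasGaussianLaw (fun p : ℝ × ℝ ↦ (p.1 + p.2, (v : ℝ) * p.1 - u * p.2))
      ((gaussianReal 0 u).prod (gaussianReal 0 v)) :=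
    (IsGaussian.hasGaussianLaw_id (μ := (gaussianReal 0 u).prod (gaussianReal 0 v))).map
      ((ContinuousLinearMap.fst ℝ ℝ ℝ + ContinuousLinearMap.snd ℝ ℝ ℝ).prod
        ((v : ℝ) • ContinuousLinearMap.fst ℝ ℝ ℝ - (u : ℝ) • ContinuousLinearMap.snd ℝ ℝ ℝ))
  refine hlaw.indepFun_of_covariance_eq_zero ?_
  have hX : MemLp (fun p : ℝ × ℝ ↦ p.1) 2 ((gaussianReal 0 u).prod (gaussianReal 0 v)) :=
    (memLp_id_gaussianReal' 2 (by simp)).comp_fst _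
  have hY : MemLp (fun p : ℝ × ℝ ↦ p.2) 2 ((gaussianReal 0 u).prod (gaussianReal 0 v)) :=
    (memLp_id_gaussianReal' 2 (by simp)).comp_snd _
  have hXX : cov[fun p : ℝ × ℝ ↦ p.1, fun p ↦ p.1; (gaussianReal 0 u).prod (gaussianReal 0 v)]
      = u := by
    rw [covariance_self hX.aemeasurable]
    exact (measurePreserving_fst.variance_fun_comp aemeasurable_id).trans variance_id_gaussianReal
  have hYY : cov[fun p : ℝ × ℝ ↦ p.2, fun p ↦ p.2; (gaussianReal 0 u).prod (gaussianReal 0 v)]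
      = v := by
    rw [covariance_self hY.aemeasurable]
    exact (measurePreserving_snd.variance_fun_comp aemeasurable_id).trans variance_id_gaussianReal
  have hXY : cov[fun p : ℝ × ℝ ↦ p.1, fun p ↦ p.2; (gaussianReal 0 u).prod (gaussianReal 0 v)]
      = 0 :=
    (indepFun_prod measurable_id measurable_id).covariance_eq_zero hX hY
  have hYX := hXY
  rw [covariance_comm] at hYX
  have hZ : MemLp (fun p : ℝ × ℝ ↦ p.1 + p.2) 2 ((gaussianReal 0 u).prod (gaussianReal 0 v)) :=
    hX.add hY
  rw [covariance_fun_sub_right hZ (hX.const_mul _) (hY.const_mul _),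
    covariance_const_mul_right, covariance_const_mul_right]
  change _ * cov[(fun p : ℝ × ℝ ↦ p.1) + (fun p ↦ p.2), _; _] -
    _ * cov[(fun p : ℝ × ℝ ↦ p.1) + (fun p ↦ p.2), _; _] = _
  rw [covariance_add_left hX hY hX, covariance_add_left hX hY hY, hXX, hYY, hXY, hYX]
  ring

lemma integral_sq_gaussianReal (v : ℝ≥0) : ∫ x, x ^ 2 ∂gaussianReal 0 v = v := by
  rw [← variance_id_gaussianReal (μ := 0) (v := v),
    variance_of_integral_eq_zero aemeasurable_id (by simp)]
  rfl

/-- The conditional second moment of a centered Gaussian `X` given its sum with an independent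
centered Gaussian, integrated against a bounded function of the sum. -/
lemma integral_comp_add_mul_sq_gaussianReal_prod (u v : ℝ≥0) (huv : u + v ≠ 0) {g : ℝ → ℝ}
    (hg : Measurable g) {C : ℝ} (hC : ∀ z, |g z| ≤ C) :
    ∫ p : ℝ × ℝ, g (p.1 + p.2) * p.1 ^ 2 ∂((gaussianReal 0 u).prod (gaussianReal 0 v)) =
      u * v / (u + v) * ∫ z, g z ∂gaussianReal 0 (u + v) +
      (u / (u + v)) ^ 2 * ∫ z, g z * z ^ 2 ∂gaussianReal 0 (u + v) := by
  set P := (gaussianReal 0 u).prod (gaussianReal 0 v) with hP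
  set Z : ℝ × ℝ → ℝ := fun p ↦ p.1 + p.2 with hZ
  set W : ℝ × ℝ → ℝ := fun p ↦ v * p.1 - u * p.2 with hW
  have hs : (u : ℝ) + v ≠ 0 := by exact_mod_cast huv
  have hX : MemLp (fun p : ℝ × ℝ ↦ p.1) 2 P := (memLp_id_gaussianReal' 2 (by simp)).comp_fst _
  have hY : MemLp (fun p : ℝ × ℝ ↦ p.2) 2 P := (memLp_id_gaussianReal' 2 (by simp)).comp_snd _
  have hZm : Measurable Z := by fun_prop
  have hWm : Measurable W := by fun_prop
  have hind : IndepFun Z W P := indepFun_add_residual_gaussianReal_prod u v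
  have hmap : P.map Z = gaussianReal 0 (u + v) := by
    have h := gaussianReal_conv_gaussianReal (m₁ := 0) (m₂ := 0) (v₁ := u) (v₂ := v)
    rwa [add_zero] at h
  have hZL : MemLp Z 2 P := hX.add hY
  have hWL : MemLp W 2 P := (hX.const_mul _).sub (hY.const_mul _)
  have hEX : ∫ p, p.1 ∂P = 0 := by
    rw [hP, integral_fun_fst (fun x : ℝ ↦ x)]; simp
  have hEY : ∫ p, p.2 ∂P = 0 := by
    rw [hP, integral_fun_snd (fun x : ℝ ↦ x)]; simp
  have hEXX : ∫ p, p.1 ^ 2 ∂P = u := by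
    rw [hP, integral_fun_fst (fun x : ℝ ↦ x ^ 2), integral_sq_gaussianReal]; simp
  have hEYY : ∫ p, p.2 ^ 2 ∂P = v := by
    rw [hP, integral_fun_snd (fun x : ℝ ↦ x ^ 2), integral_sq_gaussianReal]; simp
  have hEXY : ∫ p, p.1 * p.2 ∂P = 0 := by
    rw [hP, integral_prod_mul (fun x : ℝ ↦ x) (fun x : ℝ ↦ x)]; simp
  have hEW : ∫ p, W p ∂P = 0 := by
    rw [hW, integral_sub ((hX.integrable one_le_two).const_mul _)
      ((hY.integrable one_le_two).const_mul _), integral_const_mul, integral_const_mul, hEX, hEY]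
    ring
  have hEWW : ∫ p, W p ^ 2 ∂P = u * v * (u + v) := by
    have h : ∀ p, W p ^ 2 =
        (v : ℝ) ^ 2 * p.1 ^ 2 - 2 * u * v * (p.1 * p.2) + (u : ℝ) ^ 2 * p.2 ^ 2 := by
      intro p; simp only [hW]; ring
    have hXY : Integrable (fun p : ℝ × ℝ ↦ p.1 * p.2) P := hX.integrable_mul hY
    have hsub : Integrable
        (fun p : ℝ × ℝ ↦ (v : ℝ) ^ 2 * p.1 ^ 2 - 2 * u * v * (p.1 * p.2)) P :=
      (hX.integrable_sq.const_mul _).sub (hXY.const_mul _)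
    simp_rw [h]
    rw [integral_add hsub (hY.integrable_sq.const_mul _),
      integral_sub (hX.integrable_sq.const_mul _) (hXY.const_mul _), integral_const_mul,
      integral_const_mul, integral_const_mul, hEXX, hEYY, hEXY]
    ring
  have hbdd : ∀ {f : ℝ × ℝ → ℝ}, Integrable f P → Integrable (fun p ↦ g (Z p) * f p) P :=
    fun hf ↦ hf.bdd_mul (hg.comp hZm).aestronglyMeasurable (.of_forall fun p ↦ hC _)
  have hZW : Integrable (fun p ↦ Z p * W p) P := hZL.integrable_mul hWL
  have hcross : ∫ p, g (Z p) * (Z p * W p) ∂P = 0 := by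
    have h := hind.integral_fun_comp_mul_comp (f := fun z ↦ g z * z) (g := fun w ↦ w)
      hZm.aemeasurable hWm.aemeasurable (hg.mul measurable_id).aestronglyMeasurable
      measurable_id.aestronglyMeasurable
    simp only [hEW, mul_zero, mul_assoc] at h
    exact h
  have hres : ∫ p, g (Z p) * W p ^ 2 ∂P = (∫ p, g (Z p) ∂P) * (u * v * (u + v)) := by
    rw [← hEWW]
    exact hind.integral_fun_comp_mul_comp (f := g) (g := fun w ↦ w ^ 2)
      hZm.aemeasurable hWm.aemeasurable hg.aestronglyMeasurable
      (measurable_id.pow_const 2).aestronglyMeasurable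
  have hdecomp : ∀ p : ℝ × ℝ, g (p.1 + p.2) * p.1 ^ 2 =
      (u / (u + v)) ^ 2 * (g (Z p) * Z p ^ 2) + 2 * u / (u + v) ^ 2 * (g (Z p) * (Z p * W p)) +
        1 / (u + v) ^ 2 * (g (Z p) * W p ^ 2) := by
    intro p
    simp only [hZ, hW]
    field_simp
    ring
  have hadd : Integrable (fun p ↦ (u / (u + v) : ℝ) ^ 2 * (g (Z p) * Z p ^ 2) +
      2 * u / (u + v) ^ 2 * (g (Z p) * (Z p * W p))) P :=
    ((hbdd hZL.integrable_sq).const_mul _).add ((hbdd hZW).const_mul _)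
  have hgsq : Measurable (fun z ↦ g z * z ^ 2) := by fun_prop
  simp_rw [hdecomp]
  rw [integral_add hadd ((hbdd hWL.integrable_sq).const_mul _),
    integral_add ((hbdd hZL.integrable_sq).const_mul _) ((hbdd hZW).const_mul _),
    integral_const_mul, integral_const_mul, integral_const_mul, hcross, hres, ← hmap,
    integral_map hZm.aemeasurable hg.aestronglyMeasurable,
    integral_map hZm.aemeasurable hgsq.aestronglyMeasurable]
  field_simp
  ring

/-- The density of `N(0, w)` is at most `1 / √(2πw)`. -/
lemma setIntegral_gaussianReal_le {w : ℝ≥0} (hw : w ≠ 0) {s : Set ℝ} (hs : MeasurableSet s)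
    {f : ℝ → ℝ} (hf : ∀ z ∈ s, 0 ≤ f z) (hfi : IntegrableOn f s) :
    ∫ z, s.indicator f z ∂gaussianReal 0 w ≤ 1 / √(2 * π * w) * ∫ z in s, f z := by
  rw [integral_gaussianReal_eq_integral_smul hw, ← integral_indicator hs, ← integral_const_mul]
  have hnn : ∀ z, 0 ≤ s.indicator f z := fun z ↦ Set.indicator_nonneg hf z
  refine integral_mono_of_nonneg
    (.of_forall fun z ↦ mul_nonneg (gaussianPDFReal_nonneg _ _ _) (hnn z))
    ((hfi.integrable_indicator hs).const_mul _) (.of_forall fun z ↦ ?_)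
  refine mul_le_mul_of_nonneg_right ?_ (hnn z)
  rw [gaussianPDFReal, one_div]
  refine mul_le_of_le_one_right (by positivity) (exp_le_one_iff.2 ?_)
  exact div_nonpos_of_nonpos_of_nonneg (neg_nonpos.2 (sq_nonneg _)) (by positivity)

lemma one_sub_tanh_eq (x : ℝ) : 1 - tanh x = 2 * exp (-(2 * x)) / (1 + exp (-(2 * x))) := by
  have h : exp (-(2 * x)) = exp (-x) / exp x := by rw [← exp_sub]; ring_nf
  rw [tanh_eq, h]
  field_simp
  ring

lemma one_sub_tanh_le (x : ℝ) : 1 - tanh x ≤ 2 * exp (-(2 * x)) := by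
  rw [one_sub_tanh_eq]
  exact div_le_self (by positivity) (by linarith [exp_pos (-(2 * x))])

lemma one_sub_tanh_sq_nonneg (x : ℝ) : 0 ≤ 1 - tanh x ^ 2 :=
  sub_nonneg.2 (tanh_sq_lt_one x).le

lemma one_sub_tanh_sq_le (x : ℝ) : 1 - tanh x ^ 2 ≤ 4 * exp (-(2 * x)) := by
  nlinarith [one_sub_tanh_le x, tanh_lt_one x, neg_one_lt_tanh x]

lemma tendsto_tanh_atTop : Filter.Tendsto tanh Filter.atTop (nhds 1) := by
  have h : Filter.Tendsto (fun x : ℝ ↦ 1 - 2 * exp (-(2 * x))) Filter.atTop (nhds 1) := by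
    have h0 : Filter.Tendsto (fun x : ℝ ↦ exp (-(2 * x))) Filter.atTop (nhds 0) :=
      tendsto_exp_neg_atTop_nhds_zero.comp
        (Filter.tendsto_id.const_mul_atTop (by norm_num : (0 : ℝ) < 2))
    simpa using (h0.const_mul 2).const_sub 1
  exact tendsto_of_tendsto_of_tendsto_of_le_of_le h tendsto_const_nhds
    (fun x ↦ by linarith [one_sub_tanh_le x]) (fun x ↦ (tanh_lt_one x).le)

lemma hasDerivAt_tanh (x : ℝ) : HasDerivAt tanh (1 - tanh x ^ 2) x := by
  have h := (hasDerivAt_sinh x).div (hasDerivAt_cosh x) (cosh_pos x).ne'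
  have he : tanh = sinh / cosh := by ext y; exact tanh_eq_sinh_div_cosh y
  rw [he]
  refine h.congr_deriv ?_
  have := (cosh_pos x).ne'
  rw [Pi.div_apply]
  field_simp

lemma continuous_tanh : Continuous tanh :=
  continuous_iff_continuousAt.2 fun x ↦ (hasDerivAt_tanh x).continuousAt

section

variable {μ : ℝ}

lemma hasDerivAt_mul_tanh_div (hμ : 0 < μ) (z : ℝ) :
    HasDerivAt (fun z ↦ μ * tanh (z / μ)) (1 - tanh (z / μ) ^ 2) z := by
  have h := ((hasDerivAt_tanh (z / μ)).comp z ((hasDerivAt_id z).div_const μ)).const_mul μ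
  exact h.congr_deriv (by field_simp)

lemma tendsto_mul_tanh_div_atTop (hμ : 0 < μ) :
    Filter.Tendsto (fun z ↦ μ * tanh (z / μ)) Filter.atTop (nhds μ) := by
  simpa using (tendsto_tanh_atTop.comp (Filter.tendsto_id.atTop_div_const hμ)).const_mul μ

lemma integrableOn_Ioi_one_sub_tanh_sq_div (hμ : 0 < μ) :
    IntegrableOn (fun z ↦ 1 - tanh (z / μ) ^ 2) (Set.Ioi 0) :=
  integrableOn_Ioi_deriv_of_nonneg' (fun z _ ↦ hasDerivAt_mul_tanh_div hμ z)
    (fun _ _ ↦ one_sub_tanh_sq_nonneg _) (tendsto_mul_tanh_div_atTop hμ)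

lemma integral_Ioi_one_sub_tanh_sq_div (hμ : 0 < μ) :
    ∫ z in Set.Ioi 0, (1 - tanh (z / μ) ^ 2) = μ := by
  rw [integral_Ioi_of_hasDerivAt_of_nonneg' (fun z _ ↦ hasDerivAt_mul_tanh_div hμ z)
    (fun _ _ ↦ one_sub_tanh_sq_nonneg _) (tendsto_mul_tanh_div_atTop hμ)]
  simp

lemma integral_Ioi_exp_neg_mul_sq (hμ : 0 < μ) :
    ∫ z in Set.Ioi 0, 4 * (z ^ 2 * exp (-(2 / μ * z))) = μ ^ 3 := by
  have h := integral_rpow_mul_exp_neg_mul_Ioi (a := 3) (r := 2 / μ) (by norm_num) (by positivity)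
  have h3 : Gamma 3 = 2 := by simp
  have h2 : (3 : ℝ) - 1 = (2 : ℕ) := by norm_num
  have hr : (1 / (2 / μ)) ^ (3 : ℝ) = (1 / (2 / μ)) ^ 3 := by exact_mod_cast rpow_natCast _ 3
  simp only [h2, rpow_natCast, h3, hr] at h
  rw [integral_const_mul, h]
  field_simp
  norm_num

lemma integrableOn_Ioi_exp_neg_mul_sq (hμ : 0 < μ) :
    IntegrableOn (fun z ↦ 4 * (z ^ 2 * exp (-(2 / μ * z)))) (Set.Ioi 0) := by
  refine Integrable.of_integral_ne_zero ?_
  rw [integral_Ioi_exp_neg_mul_sq hμ]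
  positivity

lemma one_sub_tanh_sq_div_mul_sq_le (z : ℝ) :
    (1 - tanh (z / μ) ^ 2) * z ^ 2 ≤ 4 * (z ^ 2 * exp (-(2 / μ * z))) := by
  have h := mul_le_mul_of_nonneg_right (one_sub_tanh_sq_le (z / μ)) (sq_nonneg z)
  rw [show 2 / μ * z = 2 * (z / μ) by ring]
  linarith

lemma integrableOn_Ioi_one_sub_tanh_sq_div_mul_sq (hμ : 0 < μ) :
    IntegrableOn (fun z ↦ (1 - tanh (z / μ) ^ 2) * z ^ 2) (Set.Ioi 0) := by
  have hc : Continuous fun z ↦ (1 - tanh (z / μ) ^ 2) * z ^ 2 := by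
    have := continuous_tanh
    fun_prop
  refine (integrableOn_Ioi_exp_neg_mul_sq hμ).mono' hc.aestronglyMeasurable (.of_forall fun z ↦ ?_)
  rw [norm_of_nonneg (mul_nonneg (one_sub_tanh_sq_nonneg _) (sq_nonneg z))]
  exact one_sub_tanh_sq_div_mul_sq_le z

lemma integral_Ioi_one_sub_tanh_sq_div_mul_sq_le (hμ : 0 < μ) :
    ∫ z in Set.Ioi 0, (1 - tanh (z / μ) ^ 2) * z ^ 2 ≤ μ ^ 3 := by
  rw [← integral_Ioi_exp_neg_mul_sq hμ]
  exact integral_mono (integrableOn_Ioi_one_sub_tanh_sq_div_mul_sq hμ)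
    (integrableOn_Ioi_exp_neg_mul_sq hμ) one_sub_tanh_sq_div_mul_sq_le

end

/-- Lemma: Gaussian expectation bound for
`(1 - tanh²((X+Y)/μ)) X² 1{X+Y>0}`. -/
theorem statement16 (σX σY μ : ℝ) (hX : 0 < σX) (hY : 0 < σY) (hμ : 0 < μ) :
    (∫ v : ℝ × ℝ,
        (if 0 < v.1 + v.2 then (1 - Real.tanh ((v.1 + v.2) / μ) ^ 2) * v.1 ^ 2 else 0)
        ∂((gaussianReal 0 ⟨σX ^ 2, sq_nonneg σX⟩).prod
            (gaussianReal 0 ⟨σY ^ 2, sq_nonneg σY⟩))) ≤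
      1 / Real.sqrt (2 * π) * (μ * σX ^ 2 * σY ^ 2 / (σX ^ 2 + σY ^ 2) ^ ((3 : ℝ) / 2)) +
      3 / (4 * Real.sqrt (2 * π)) * (σX ^ 2 * μ ^ 3 / (σX ^ 2 + σY ^ 2) ^ ((5 : ℝ) / 2)) *
        (3 * μ ^ 2 + 4 * σX ^ 2) := by
  set u : ℝ≥0 := ⟨σX ^ 2, sq_nonneg σX⟩ with hu
  set v : ℝ≥0 := ⟨σY ^ 2, sq_nonneg σY⟩ with hv
  have hu' : (u : ℝ) = σX ^ 2 := rfl
  have hv' : (v : ℝ) = σY ^ 2 := rfl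
  set S : ℝ := σX ^ 2 + σY ^ 2 with hS
  have hSpos : 0 < S := by positivity
  have huvS : ((u + v : ℝ≥0) : ℝ) = S := rfl
  have huv : u + v ≠ 0 := by
    rw [← NNReal.coe_ne_zero, huvS]
    exact hSpos.ne'
  set k : ℝ → ℝ := fun z ↦ 1 - tanh (z / μ) ^ 2 with hk
  have hkm : Measurable k := by
    have := continuous_tanh
    exact Continuous.measurable (by fun_prop)
  have hk0 : ∀ z, 0 ≤ k z := fun z ↦ one_sub_tanh_sq_nonneg _
  have hk1 : ∀ z, |(Set.Ioi 0).indicator k z| ≤ 1 := by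
    intro z
    rw [abs_of_nonneg (Set.indicator_nonneg (fun z _ ↦ hk0 z) z)]
    exact Set.indicator_le' (fun z _ ↦ sub_le_self _ (sq_nonneg _)) (fun _ _ ↦ zero_le_one) z
  have hmul : ∀ z, (Set.Ioi 0).indicator k z * z ^ 2 =
      (Set.Ioi 0).indicator (fun z ↦ k z * z ^ 2) z := by
    intro z
    simp only [Set.indicator_apply, ite_mul, zero_mul]
  have hlhs : ∀ p : ℝ × ℝ,
      (if 0 < p.1 + p.2 then (1 - tanh ((p.1 + p.2) / μ) ^ 2) * p.1 ^ 2 else 0) =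
        (Set.Ioi 0).indicator k (p.1 + p.2) * p.1 ^ 2 := by
    intro p
    simp only [Set.indicator_apply, Set.mem_Ioi, ite_mul, zero_mul, hk]
  have hfirst : ∫ z, (Set.Ioi 0).indicator k z ∂gaussianReal 0 (u + v) ≤ 1 / √(2 * π * S) * μ := by
    refine (setIntegral_gaussianReal_le huv measurableSet_Ioi (fun z _ ↦ hk0 z)
      (integrableOn_Ioi_one_sub_tanh_sq_div hμ)).trans_eq ?_
    rw [integral_Ioi_one_sub_tanh_sq_div hμ, huvS]
  have hsecond : ∫ z, (Set.Ioi 0).indicator k z * z ^ 2 ∂gaussianReal 0 (u + v) ≤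
      1 / √(2 * π * S) * μ ^ 3 := by
    simp_rw [hmul]
    refine (setIntegral_gaussianReal_le huv measurableSet_Ioi
      (fun z _ ↦ mul_nonneg (hk0 z) (sq_nonneg z))
      (integrableOn_Ioi_one_sub_tanh_sq_div_mul_sq hμ)).trans ?_
    rw [huvS]
    gcongr
    exact integral_Ioi_one_sub_tanh_sq_div_mul_sq_le hμ
  simp_rw [hlhs]
  rw [integral_comp_add_mul_sq_gaussianReal_prod u v huv (hkm.indicator measurableSet_Ioi) hk1,
    hu', hv', ← hS]
  have h32 : S ^ ((3 : ℝ) / 2) = S * √S := by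
    rw [sqrt_eq_rpow, ← rpow_one_add' hSpos.le (by norm_num)]
    norm_num
  have h52 : S ^ ((5 : ℝ) / 2) = S ^ 2 * √S := by
    rw [sqrt_eq_rpow, ← rpow_natCast, ← rpow_add hSpos]
    norm_num
  have hroot : 0 < √S := sqrt_pos.2 hSpos
  clear_value S
  calc _ ≤ σX ^ 2 * σY ^ 2 / S * (1 / √(2 * π * S) * μ) +
        (σX ^ 2 / S) ^ 2 * (1 / √(2 * π * S) * μ ^ 3) := by gcongr
    _ ≤ σX ^ 2 * σY ^ 2 / S * (1 / √(2 * π * S) * μ) +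
        3 / 4 * (σX ^ 2 / S ^ 2) * (1 / √(2 * π * S) * μ ^ 3) * (3 * μ ^ 2 + 4 * σX ^ 2) := by
      refine add_le_add le_rfl ?_
      have h : 0 ≤ σX ^ 2 / S ^ 2 * (1 / √(2 * π * S) * μ ^ 3) *
          (9 / 4 * μ ^ 2 + 2 * σX ^ 2) := by positivity
      linear_combination h
    _ = _ := by
      rw [h32, h52, sqrt_mul (by positivity)]
      field_simp

end
end

section
/- Let X ~ N(0, σ_X²) and Y ~ N(0, σ_Y²) be independent real Gaussian random variables with σ_X, σ_Y > 0, and let μ > 0. Then E[ tanh((X+Y)/μ) · X ] ≥ √(2/π) · σ_X² / √(σ_X² + σ_Y²) − 2σ_X² μ² / (√(2π)(σ_X² + σ_Y²)^{3/2}) − 3σ_X² μ⁴ / (2√(2π)(σ_X² + σ_Y²)^{5/2}). -/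
open MeasureTheory ProbabilityTheory Real Matrix
open scoped RealInnerProductSpace ENNReal NNReal

noncomputable section

lemma one_sub_two_mul_exp_le_tanh (x : ℝ) : 1 - 2 * rexp (-2 * x) ≤ tanh x := by
  have h : rexp (-2 * x) = rexp (-x) / rexp x := by rw [← Real.exp_sub]; ring_nf
  rw [Real.tanh_eq, h, le_div_iff₀ (by positivity), ← sub_nonneg]
  have hx : rexp x ≠ 0 := (Real.exp_pos x).ne'
  have : rexp x - rexp (-x) - (1 - 2 * (rexp (-x) / rexp x)) * (rexp x + rexp (-x))
      = 2 * (rexp (-x)) ^ 2 / rexp x := by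
    field_simp
    ring
  rw [this]
  positivity

lemma abs_sub_le_tanh_div_mul (μ z : ℝ) :
    |z| - 2 * (|z| * rexp (-(2 / μ * |z|))) ≤ tanh (z / μ) * z := by
  have habs : tanh (z / μ) * z = tanh (|z| / μ) * |z| := by
    rcases abs_cases z with ⟨h, -⟩ | ⟨h, -⟩ <;> rw [h]
    rw [neg_div, Real.tanh_neg, neg_mul_neg]
  have h := mul_le_mul_of_nonneg_right (one_sub_two_mul_exp_le_tanh (|z| / μ)) (abs_nonneg z)
  rw [habs]
  refine le_trans (le_of_eq ?_) h
  rw [show -2 * (|z| / μ) = -(2 / μ * |z|) by ring]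
  ring

lemma integral_Ioi_mul_exp_neg_mul {r : ℝ} (hr : 0 < r) :
    ∫ x in Set.Ioi (0 : ℝ), x * rexp (-(r * x)) = 1 / r ^ 2 := by
  have h := Real.integral_rpow_mul_exp_neg_mul_Ioi (a := 2) (r := r) (by norm_num) hr
  norm_num at h
  simpa using h

lemma integral_abs_mul_exp_neg_mul_abs {r : ℝ} (hr : 0 < r) :
    ∫ x : ℝ, |x| * rexp (-(r * |x|)) = 2 / r ^ 2 := by
  rw [integral_comp_abs (f := fun x => x * rexp (-(r * x))), integral_Ioi_mul_exp_neg_mul hr]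
  ring

lemma integrable_abs_mul_exp_neg_mul_abs {r : ℝ} (hr : 0 < r) :
    Integrable fun x : ℝ => |x| * rexp (-(r * |x|)) := by
  refine Integrable.of_integral_ne_zero ?_
  rw [integral_abs_mul_exp_neg_mul_abs hr]
  positivity

lemma gaussianPDFReal_le (m : ℝ) (v : ℝ≥0) (x : ℝ) :
    gaussianPDFReal m v x ≤ (√(2 * π * v))⁻¹ := by
  rw [gaussianPDFReal_def]
  refine mul_le_of_le_one_right (by positivity) (Real.exp_le_one_iff.2 ?_)
  exact div_nonpos_of_nonpos_of_nonneg (by nlinarith [sq_nonneg (x - m)]) (by positivity)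

lemma integral_abs_mul_exp_gaussianReal_le {v : ℝ≥0} (hv : v ≠ 0) {r : ℝ} (hr : 0 < r) :
    ∫ x, |x| * rexp (-(r * |x|)) ∂(gaussianReal 0 v) ≤ (√(2 * π * v))⁻¹ * (2 / r ^ 2) := by
  rw [integral_gaussianReal_eq_integral_smul hv, ← integral_abs_mul_exp_neg_mul_abs hr,
    ← integral_const_mul]
  refine integral_mono_of_nonneg (ae_of_all _ fun x => ?_)
    ((integrable_abs_mul_exp_neg_mul_abs hr).const_mul _) (ae_of_all _ fun x => ?_)
  · exact mul_nonneg (gaussianPDFReal_nonneg _ _ _) (by positivity)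
  · exact mul_le_mul_of_nonneg_right (gaussianPDFReal_le _ _ _) (by positivity)

lemma integral_abs_gaussianReal {v : ℝ≥0} (hv : v ≠ 0) :
    ∫ x, |x| ∂(gaussianReal 0 v) = (√(2 * π * v))⁻¹ * (2 * v) := by
  have hv0 : (0 : ℝ) < v := by positivity
  have h := integral_rpow_mul_exp_neg_mul_rpow (p := 2) (q := 1) (b := 1 / (2 * (v : ℝ)))
    (by norm_num) (by norm_num) (by positivity)
  norm_num at h
  rw [integral_gaussianReal_eq_integral_smul hv]
  have hpdf (x : ℝ) : gaussianPDFReal 0 v x • |x|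
      = (√(2 * π * v))⁻¹ * (|x| * rexp (-((v : ℝ)⁻¹ * (1 / 2) * |x| ^ 2))) := by
    rw [gaussianPDFReal_def, smul_eq_mul, sq_abs]
    have : -(x - 0) ^ 2 / (2 * (v : ℝ)) = -((v : ℝ)⁻¹ * (1 / 2) * x ^ 2) := by
      field_simp
      ring
    simp only [this]
    ring
  simp_rw [hpdf]
  rw [integral_const_mul,
    integral_comp_abs (f := fun x => x * rexp (-((v : ℝ)⁻¹ * (1 / 2) * x ^ 2))), h]
  rw [Real.rpow_neg_one]
  field_simp

/-- Conditioning `X` on `X + Y` for independent centered Gaussians. -/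
lemma integral_mul_fst_gaussianReal_prod (a b : ℝ≥0) (hab : a + b ≠ 0) {φ : ℝ → ℝ}
    (hφ : Measurable φ) {C : ℝ} (hC : ∀ x, ‖φ x‖ ≤ C) :
    ∫ v : ℝ × ℝ, φ (v.1 + v.2) * v.1 ∂((gaussianReal 0 a).prod (gaussianReal 0 b))
      = a / (a + b) * ∫ z, φ z * z ∂(gaussianReal 0 (a + b)) := by
  set P := (gaussianReal 0 a).prod (gaussianReal 0 b)
  have hind : IndepFun (fun v : ℝ × ℝ => v.1) (fun v : ℝ × ℝ => v.2) P :=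
    indepFun_prod measurable_id measurable_id
  have hlaw1 : P.map (fun v : ℝ × ℝ => v.1) = gaussianReal 0 a := Measure.fst_prod
  have hlaw2 : P.map (fun v : ℝ × ℝ => v.2) = gaussianReal 0 b := Measure.snd_prod
  have hg1 : HasGaussianLaw (fun v : ℝ × ℝ => v.1) P := ⟨by rw [hlaw1]; infer_instance⟩
  have hg2 : HasGaussianLaw (fun v : ℝ × ℝ => v.2) P := ⟨by rw [hlaw2]; infer_instance⟩
  have hg := hind.hasGaussianLaw hg1 hg2
  have hZ : P.map (fun v : ℝ × ℝ => v.1 + v.2) = gaussianReal 0 (a + b) := by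
    have := gaussianReal_add_gaussianReal_of_indepFun hind hlaw1 hlaw2
    rwa [add_zero] at this
  have hm1 : ∫ v, v.1 ∂P = 0 := by
    rw [← integral_id_gaussianReal (μ := 0) (v := a), ← hlaw1,
      integral_map (by fun_prop) (by fun_prop)]
  have hm2 : ∫ v, v.2 ∂P = 0 := by
    rw [← integral_id_gaussianReal (μ := 0) (v := b), ← hlaw2,
      integral_map (by fun_prop) (by fun_prop)]
  have hv1 : cov[fun v : ℝ × ℝ => v.1, fun v : ℝ × ℝ => v.1; P] = a := by
    rw [covariance_self (by fun_prop), ← variance_id_gaussianReal (μ := 0) (v := a), ← hlaw1,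
      variance_map (by fun_prop) (by fun_prop)]
    rfl
  have hv2 : cov[fun v : ℝ × ℝ => v.2, fun v : ℝ × ℝ => v.2; P] = b := by
    rw [covariance_self (by fun_prop), ← variance_id_gaussianReal (μ := 0) (v := b), ← hlaw2,
      variance_map (by fun_prop) (by fun_prop)]
    rfl
  have hc : cov[fun v : ℝ × ℝ => v.1, fun v : ℝ × ℝ => v.2; P] = 0 :=
    hind.covariance_eq_zero hg1.memLp_two hg2.memLp_two
  have hindZW : IndepFun (fun v : ℝ × ℝ => v.1 + v.2)
      (fun v : ℝ × ℝ => (b : ℝ) * v.1 - a * v.2) P := by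
    refine HasGaussianLaw.indepFun_of_covariance_eq_zero ?_ ?_
    · exact hg.map_fun (((ContinuousLinearMap.fst ℝ ℝ ℝ) + (ContinuousLinearMap.snd ℝ ℝ ℝ)).prod
        ((b : ℝ) • (ContinuousLinearMap.fst ℝ ℝ ℝ) - (a : ℝ) • (ContinuousLinearMap.snd ℝ ℝ ℝ)))
    · have e1 : MemLp (fun v : ℝ × ℝ => (b : ℝ) * v.1) 2 P := hg1.memLp_two.const_mul _
      have e2 : MemLp (fun v : ℝ × ℝ => (a : ℝ) * v.2) 2 P := hg2.memLp_two.const_mul _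
      change cov[(fun v : ℝ × ℝ => v.1) + (fun v : ℝ × ℝ => v.2),
        (fun v : ℝ × ℝ => (b : ℝ) * v.1) - (fun v : ℝ × ℝ => (a : ℝ) * v.2); P] = 0
      rw [covariance_add_left hg1.memLp_two hg2.memLp_two (e1.sub e2),
        covariance_sub_right hg1.memLp_two e1 e2,
        covariance_sub_right hg2.memLp_two e1 e2]
      simp only [covariance_const_mul_right, hv1, hv2, hc]
      rw [covariance_comm, hc]
      ring
  have hWmean : ∫ v, ((b : ℝ) * v.1 - a * v.2) ∂P = 0 := by
    rw [integral_sub (hg1.integrable.const_mul _) (hg2.integrable.const_mul _),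
      integral_const_mul, integral_const_mul, hm1, hm2]
    ring
  have hφZ : AEStronglyMeasurable (fun v : ℝ × ℝ => φ (v.1 + v.2)) P :=
    (hφ.comp (measurable_fst.add measurable_snd)).aestronglyMeasurable
  have hzero : ∫ v, φ (v.1 + v.2) * ((b : ℝ) * v.1 - a * v.2) ∂P = 0 := by
    have hi : IndepFun (fun v : ℝ × ℝ => φ (v.1 + v.2))
      (fun v : ℝ × ℝ => (b : ℝ) * v.1 - a * v.2) P := hindZW.comp hφ measurable_id
    rw [hi.integral_fun_mul_eq_mul_integral hφZ (by fun_prop), hWmean, mul_zero]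
  have hsum : ∫ v, φ (v.1 + v.2) * (v.1 + v.2) ∂P = ∫ z, φ z * z ∂(gaussianReal 0 (a + b)) := by
    rw [← hZ, integral_map (by fun_prop) (by fun_prop)]
  have hne : (a : ℝ) + b ≠ 0 := by exact_mod_cast hab
  have hsplit (v : ℝ × ℝ) : φ (v.1 + v.2) * v.1
      = (a : ℝ) / (a + b) * (φ (v.1 + v.2) * (v.1 + v.2))
        + 1 / ((a : ℝ) + b) * (φ (v.1 + v.2) * ((b : ℝ) * v.1 - a * v.2)) := by
    field_simp
    ring
  have hbd : ∀ᵐ v : ℝ × ℝ ∂P, ‖φ (v.1 + v.2)‖ ≤ C := ae_of_all _ fun v => hC _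
  simp_rw [hsplit]
  rw [integral_add, integral_const_mul, integral_const_mul, hzero, hsum, mul_zero, add_zero]
  · exact ((hg1.integrable.add hg2.integrable).bdd_mul hφZ hbd).const_mul _
  · exact (((hg1.integrable.const_mul _).sub (hg2.integrable.const_mul _)).bdd_mul
      hφZ hbd).const_mul _

lemma measurable_tanh_div (μ : ℝ) : Measurable fun z : ℝ => tanh (z / μ) := by
  simp_rw [Real.tanh_eq_sinh_div_cosh]
  fun_prop

lemma le_integral_tanh_div_mul_gaussianReal {v : ℝ≥0} (hv : v ≠ 0) {μ : ℝ} (hμ : 0 < μ) :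
    (√(2 * π * v))⁻¹ * (2 * v - μ ^ 2) ≤ ∫ z, tanh (z / μ) * z ∂(gaussianReal 0 v) := by
  have hid : Integrable (fun z : ℝ => z) (gaussianReal 0 v) :=
    (IsGaussian.hasGaussianLaw_id (μ := gaussianReal 0 v)).integrable
  have hbd (z : ℝ) : ‖tanh (z / μ)‖ ≤ 1 := (Real.abs_tanh_lt_one _).le
  have hexp : Integrable (fun z : ℝ => |z| * rexp (-(2 / μ * |z|))) (gaussianReal 0 v) := by
    refine hid.abs.mul_bdd (c := 1) (by fun_prop) (ae_of_all _ fun z => ?_)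
    rw [Real.norm_eq_abs, Real.abs_exp, Real.exp_le_one_iff, neg_nonpos]
    positivity
  have h := integral_mono (hid.abs.sub (hexp.const_mul 2))
    (hid.bdd_mul (measurable_tanh_div μ).aestronglyMeasurable (ae_of_all _ hbd))
    fun z => abs_sub_le_tanh_div_mul μ z
  simp only [Pi.sub_apply] at h
  rw [integral_sub hid.abs (hexp.const_mul 2), integral_const_mul,
    integral_abs_gaussianReal hv] at h
  have h2 := integral_abs_mul_exp_gaussianReal_le hv (r := 2 / μ) (by positivity)
  have h3 : 2 / (2 / μ) ^ 2 = μ ^ 2 / 2 := by field_simp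
  rw [h3] at h2
  linarith

/-- Lemma: Gaussian expectation lower bound for `tanh((X+Y)/μ) X`. -/
theorem statement18 (σX σY μ : ℝ) (hX : 0 < σX) (hY : 0 < σY) (hμ : 0 < μ) :
    Real.sqrt (2 / π) * (σX ^ 2 / Real.sqrt (σX ^ 2 + σY ^ 2)) -
      2 * σX ^ 2 * μ ^ 2 / (Real.sqrt (2 * π) * (σX ^ 2 + σY ^ 2) ^ ((3 : ℝ) / 2)) -
      3 * σX ^ 2 * μ ^ 4 / (2 * Real.sqrt (2 * π) * (σX ^ 2 + σY ^ 2) ^ ((5 : ℝ) / 2)) ≤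
    ∫ v : ℝ × ℝ, Real.tanh ((v.1 + v.2) / μ) * v.1
      ∂((gaussianReal 0 ⟨σX ^ 2, sq_nonneg σX⟩).prod
          (gaussianReal 0 ⟨σY ^ 2, sq_nonneg σY⟩)) := by
  set a : ℝ≥0 := ⟨σX ^ 2, sq_nonneg σX⟩
  set b : ℝ≥0 := ⟨σY ^ 2, sq_nonneg σY⟩
  have ha : (a : ℝ) = σX ^ 2 := rfl
  have hb : (b : ℝ) = σY ^ 2 := rfl
  have hpos : 0 < σX ^ 2 + σY ^ 2 := by positivity
  have hab : a + b ≠ 0 := by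
    rw [← NNReal.coe_ne_zero, NNReal.coe_add, ha, hb]
    exact hpos.ne'
  rw [integral_mul_fst_gaussianReal_prod a b hab (measurable_tanh_div μ) (C := 1)
    fun x => (Real.abs_tanh_lt_one _).le]
  have h := le_integral_tanh_div_mul_gaussianReal hab hμ
  rw [NNReal.coe_add] at h
  rw [ha, hb] at *
  have h' := mul_le_mul_of_nonneg_left h (show 0 ≤ σX ^ 2 / (σX ^ 2 + σY ^ 2) by positivity)
  refine le_trans ?_ h'
  have hthird : 0 ≤ 3 * σX ^ 2 * μ ^ 4 /
      (2 * √(2 * π) * (σX ^ 2 + σY ^ 2) ^ ((5 : ℝ) / 2)) := by positivity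
  set s := √(σX ^ 2 + σY ^ 2) with hs
  have hs0 : 0 < s := Real.sqrt_pos.2 hpos
  have hss : σX ^ 2 + σY ^ 2 = s ^ 2 := (Real.sq_sqrt hpos.le).symm
  have hpow : (σX ^ 2 + σY ^ 2) ^ ((3 : ℝ) / 2) = s ^ 3 := by
    rw [hss, ← Real.rpow_natCast s 2, ← Real.rpow_mul hs0.le, ← Real.rpow_natCast s 3]
    norm_num
  have hp0 : 0 < √(2 * π) := by positivity
  have hroot : √(2 * π * (σX ^ 2 + σY ^ 2)) = √(2 * π) * s :=
    Real.sqrt_mul (by positivity) _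
  have hconst : √(2 / π) = 2 / √(2 * π) := by
    rw [show 2 / π = 2 ^ 2 / (2 * π) by field_simp,
      Real.sqrt_div (by norm_num), Real.sqrt_sq (by norm_num)]
  rw [hpow, hroot, hconst, hss]
  rw [hss] at hthird
  have hfinal : 2 / √(2 * π) * (σX ^ 2 / s) - 2 * σX ^ 2 * μ ^ 2 / (√(2 * π) * s ^ 3)
      = σX ^ 2 / s ^ 2 * ((√(2 * π) * s)⁻¹ * (2 * s ^ 2 - μ ^ 2))
        - σX ^ 2 * μ ^ 2 / (√(2 * π) * s ^ 3) := by
    field_simp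
    ring
  have hrest : 0 ≤ σX ^ 2 * μ ^ 2 / (√(2 * π) * s ^ 3) := by positivity
  linarith

end
end
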